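/- Let d ≥ 3, P = -div(G(x)∇) as above, b_jk ∈ C₀^∞(ℝ^d) for 1 ≤ j,k ≤ d, and set R_c = - Σ_{j,k} R(j)* b_jk(x) R(k), where R(j) are the Riesz transform components of P. Then for any φ ∈ C₀^∞(ℝ), ‖R_c φ(P/λ)‖_{L²→L²} → 0 as λ → 0⁺. -/

import Mathlib

open MeasureTheory Filter Topology Complex
open scoped Real ENNReal FourierTransform ComplexConjugate

noncomputable section

/-- Euclidean space `ℝ^d`. -/
abbrev Ed (d : ℕ) : Type := EuclideanSpace ℝ (Fin d)

/-- `L²(ℝ^d)` with complex values. -/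
abbrev L2 (d : ℕ) := MeasureTheory.Lp ℂ 2 (volume : Measure (Ed d))

/-- The partial derivative `∂_j u`. -/
def pd (d : ℕ) (j : Fin d) (u : Ed d → ℂ) : Ed d → ℂ :=
  fun x => fderiv ℝ u x (EuclideanSpace.single j (1:ℝ))

/-- The operator `∑_{j,k} D_j (b_{jk} D_k) = - ∑_{j,k} ∂_j (b_{jk} ∂_k)` (complex
coefficients), applied to a function `u`. -/
def divGradC (d : ℕ) (b : Ed d → Fin d → Fin d → ℂ) (u : Ed d → ℂ) : Ed d → ℂ :=
  fun x => -∑ j : Fin d, ∑ k : Fin d,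
    fderiv ℝ (fun y => b y j k * fderiv ℝ u y (EuclideanSpace.single k (1:ℝ))) x
      (EuclideanSpace.single j (1:ℝ))

/-- `- div (G ∇ u) = ∑_{j,k} D_j (G_{jk} D_k) u` for a real coefficient matrix `G`. -/
def divGrad (d : ℕ) (G : Ed d → Fin d → Fin d → ℝ) (u : Ed d → ℂ) : Ed d → ℂ :=
  divGradC d (fun x j k => (G x j k : ℂ)) u

/-- The operation `a ↦ x·∇a` on real valued functions. -/
def xdotOp (d : ℕ) : (Ed d → ℝ) → Ed d → ℝ := fun a x => fderiv ℝ a x x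

/-- The operation `a ↦ x·∇a` on complex valued functions. -/
def xdotC (d : ℕ) : (Ed d → ℂ) → Ed d → ℂ := fun a x => fderiv ℝ a x x

/-- `a ∈ C_b^∞(ℝ^d)`: smooth with all derivatives bounded. -/
def CbSmooth (d : ℕ) (a : Ed d → ℝ) : Prop :=
  ContDiff ℝ (⊤ : ℕ∞) a ∧ ∀ n : ℕ, ∃ C : ℝ, ∀ x, ‖iteratedFDeriv ℝ n a x‖ ≤ C

/-- `a ∈ S_dil(ℝ^d)` : `a ∈ C_b^∞` and `(x·∇)^n a ∈ L^∞` for all `n`. -/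
def MemSdil (d : ℕ) (a : Ed d → ℝ) : Prop :=
  CbSmooth d a ∧ ∀ n : ℕ, ∃ C : ℝ, ∀ x, |(xdotOp d)^[n] a x| ≤ C

/-- Complex-valued version of `S_dil(ℝ^d)`. -/
def MemSdilC (d : ℕ) (a : Ed d → ℂ) : Prop :=
  (ContDiff ℝ (⊤ : ℕ∞) a ∧ ∀ n : ℕ, ∃ C : ℝ, ∀ x, ‖iteratedFDeriv ℝ n a x‖ ≤ C) ∧
  ∀ n : ℕ, ∃ C : ℝ, ∀ x, ‖(xdotC d)^[n] a x‖ ≤ C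

/-- The coefficient matrix is symmetric with real entries. -/
def SymmetricCoef (d : ℕ) (G : Ed d → Fin d → Fin d → ℝ) : Prop := ∀ x j k, G x j k = G x k j

/-- Uniform ellipticity: `Λ₊ ≥ G(x) ≥ Λ₋ > 0` as quadratic forms. -/
def UniformlyElliptic (d : ℕ) (G : Ed d → Fin d → Fin d → ℝ) : Prop :=
  ∃ lam Lam : ℝ, 0 < lam ∧ ∀ (x : Ed d) (v : Fin d → ℝ),
    lam * ∑ j, v j ^ 2 ≤ (∑ j, ∑ k, G x j k * v j * v k) ∧
      (∑ j, ∑ k, G x j k * v j * v k) ≤ Lam * ∑ j, v j ^ 2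

/-- The standing assumptions of the paper: `G` symmetric with entries in `C_b^∞`,
uniformly elliptic. -/
def Standing (d : ℕ) (G : Ed d → Fin d → Fin d → ℝ) : Prop :=
  (∀ j k, CbSmooth d fun x => G x j k) ∧ SymmetricCoef d G ∧ UniformlyElliptic d G

/-- `G = I_d + H`. -/
def Gmat (d : ℕ) (H : Ed d → Fin d → Fin d → ℝ) : Ed d → Fin d → Fin d → ℝ :=
  fun x j k => (if j = k then 1 else 0) + H x j k

/-- Long range condition `|∂^α (G - I_d)| ≤ C_α ⟨x⟩^{-μ-|α|}`. -/
def LongRange (d : ℕ) (G : Ed d → Fin d → Fin d → ℝ) (μ : ℝ) : Prop :=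
  ∀ (j k : Fin d) (n : ℕ), ∃ C : ℝ, ∀ x : Ed d,
    ‖iteratedFDeriv ℝ n (fun y => G y j k - if j = k then (1:ℝ) else 0) x‖
      ≤ C * ((1 + ‖x‖ ^ 2) ^ (-(μ + n) / 2) : ℝ)

/-- `R` is the resolvent `(P - z)⁻¹` of the self-adjoint realization of
`P = - div (G ∇·)`: for every `f ∈ L²`, `g = R f` solves `(P - z) g = f` in the sense
of distributions (this characterizes the resolvent uniquely). -/
def IsWeakResolvent (d : ℕ) (G : Ed d → Fin d → Fin d → ℝ) (z : ℂ)
    (R : L2 d →L[ℂ] L2 d) : Prop :=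
  ∀ (f : L2 d) (φ : SchwartzMap (Ed d) ℂ),
    (∫ x, (R f) x * divGrad d G (⇑φ) x) - z * (∫ x, (R f) x * φ x) = ∫ x, f x * φ x

/-- The japanese bracket weight `⟨x⟩^s = (1+|x|²)^{s/2}`. -/
def jweight (d : ℕ) (s : ℝ) : Ed d → ℝ := fun x => (1 + ‖x‖ ^ 2) ^ (s / 2)

/-- The dilation group `(e^{itA} u)(x) = e^{td/2} u(e^t x)`, where
`A = (x·∇ + ∇·x)/(2i)` is the generator of dilations. -/
def dil (d : ℕ) (t : ℝ) (u : Ed d → ℂ) : Ed d → ℂ :=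
  fun x => (Real.exp (t * d / 2) : ℂ) * u (Real.exp t • x)

/-- The `L²` inner product of two functions (conjugate linear in the first variable,
as is Mathlib's convention). -/
def pairL2 (d : ℕ) (u v : Ed d → ℂ) : ℂ := ∫ x : Ed d, (starRingEnd ℂ) (u x) * v x

/-- The resolvent `(hA - z)⁻¹ = (1/i) ∫₀^{±∞} e^{-itz} e^{ithA} dt` (`± Im z < 0`) of the
(rescaled) generator of dilations, realized by its defining integral formula. -/
def resDil (d : ℕ) (h : ℝ) (z : ℂ) (u : Ed d → ℂ) : Ed d → ℂ := fun x =>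
  if z.im < 0 then
    Complex.I⁻¹ * ∫ t in Set.Ici (0:ℝ), Complex.exp (-(Complex.I * t * z)) * dil d (t * h) u x
  else
    -Complex.I⁻¹ * ∫ t in Set.Iic (0:ℝ), Complex.exp (-(Complex.I * t * z)) * dil d (t * h) u x

/-- `sin(τ A) u = (e^{iτA} - e^{-iτA}) u / (2i)`. -/
def sinA (d : ℕ) (τ : ℝ) (u : Ed d → ℂ) : Ed d → ℂ :=
  fun x => (dil d τ u x - dil d (-τ) u x) / (2 * Complex.I)

/-- `F(hA) = arctan(hA)` realized through `arctan λ = ∫₀^∞ sin(tλ) e^{-t} dt / t`. -/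
def arctanA (d : ℕ) (h : ℝ) (u : Ed d → ℂ) : Ed d → ℂ :=
  fun x => ∫ t in Set.Ioi (0:ℝ), ((Real.exp (-t) / t : ℝ) : ℂ) * sinA d (t * h) u x

/-- Coefficients of the commutator `i[P,A] = ∑ D_j (2G_{jk} - x·∇G_{jk}) D_k`. -/
def commCoef (d : ℕ) (G : Ed d → Fin d → Fin d → ℝ) : Ed d → Fin d → Fin d → ℝ :=
  fun x j k => 2 * G x j k - xdotOp d (fun y => G y j k) x

/-- `P_τ = e^{-iτA} (i[P,A]) e^{iτA}` applied to a function. -/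
def ptauFun (d : ℕ) (G : Ed d → Fin d → Fin d → ℝ) (τ : ℝ) (u : Ed d → ℂ) : Ed d → ℂ :=
  dil d (-τ) (divGrad d (commCoef d G) (dil d τ u))

/-- Coefficients of `P_τ = e^{-iτA} (i[P,A]) e^{iτA}` for `P = -div((I+H)∇)`;
indeed `e^{-iτA} (∑ D_j b D_k) e^{iτA} = e^{2τ} ∑ D_j b(e^{-τ}x) D_k`. -/
def ptauCoef (d : ℕ) (H : Ed d → Fin d → Fin d → ℝ) (τ : ℝ) : Ed d → Fin d → Fin d → ℝ :=
  fun x j k => Real.exp (2 * τ) * commCoef d (Gmat d H) (Real.exp (-τ) • x) j k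

/-- Coefficients of `Q_s = ∫₀¹ (d P_τ / dτ)|_{τ=σs} dσ`. -/
def qCoef (d : ℕ) (H : Ed d → Fin d → Fin d → ℝ) (s : ℝ) : Ed d → Fin d → Fin d → ℝ :=
  fun x j k => ∫ σ in (0:ℝ)..(1:ℝ), deriv (fun τ => ptauCoef d H τ x j k) (σ * s)

/-- Coefficients of `B_τ = τ ∫₀¹ s Q_{sτ} ds`. -/
def bCoef (d : ℕ) (H : Ed d → Fin d → Fin d → ℝ) (τ : ℝ) : Ed d → Fin d → Fin d → ℝ :=
  fun x j k => τ * ∫ s in (0:ℝ)..(1:ℝ), s * qCoef d H (s * τ) x j k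

/-- The Fourier multiplier `|D|` (with symbol `|ξ|`). -/
def absD (d : ℕ) (u : Ed d → ℂ) : Ed d → ℂ :=
  fun x => 𝓕⁻ (fun ξ : Ed d => (‖ξ‖ : ℂ) * 𝓕 u ξ) x

/-- `‖ |D| w ‖_{L²}`, computed on the Fourier side (Plancherel). -/
def Dnorm (d : ℕ) (w : Ed d → ℂ) : ℝ :=
  (eLpNorm (fun ξ : Ed d => (‖ξ‖ : ℂ) * 𝓕 w ξ) 2 volume).toReal

/-- A general Fourier multiplier `ρ(D)`. -/
def multD (d : ℕ) (ρ : Ed d → ℂ) (u : Ed d → ℂ) : Ed d → ℂ :=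
  fun x => 𝓕⁻ (fun ξ : Ed d => ρ ξ * 𝓕 u ξ) x

/-- The operator `A = (x·∇ + ∇·x)/(2i) = (x·∇ + d/2)/i` applied to a function. -/
def opA (d : ℕ) (u : Ed d → ℂ) : Ed d → ℂ :=
  fun x => (fderiv ℝ u x x + (d / 2 : ℂ) * u x) / Complex.I

/-- The functions `F_ν(λ) = ∫₀^∞ sin(tλ) t/(t²+ν²) e^{-t} dt` approximating `arctan`. -/
def Fnu (ν lam : ℝ) : ℝ :=
  ∫ t in Set.Ioi (0:ℝ), Real.sin (t * lam) * (t / (t ^ 2 + ν ^ 2)) * Real.exp (-t)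

/-- `m`-admissible family in `S_dil(ℝ^d)`:
`‖∂_τ^k (x·∇)^n b_τ‖_{L^∞} ≤ C_{kn} e^{m|τ|}` for all `k, n`. -/
def AdmissibleCoeff (d : ℕ) (m : ℕ) (b : ℝ → Ed d → ℂ) : Prop :=
  (∀ τ, MemSdilC d (b τ)) ∧
  (∀ (n : ℕ) (x : Ed d), ContDiff ℝ (⊤ : ℕ∞) fun τ => (xdotC d)^[n] (b τ) x) ∧
  ∀ k n : ℕ, ∃ C : ℝ, ∀ (τ : ℝ) (x : Ed d),
    ‖iteratedDeriv k (fun σ => (xdotC d)^[n] (b σ) x) τ‖ ≤ C * Real.exp (m * |τ|)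

/-- `m`-admissible family of differential operators `B_τ = ∑ D_j b_{jk,τ} D_k`. -/
def AdmissibleOp (d : ℕ) (m : ℕ) (B : ℝ → Ed d → Fin d → Fin d → ℂ) : Prop :=
  ∀ j k, AdmissibleCoeff d m fun τ x => B τ x j k

/-- Functions that are continuous and bounded on `[0,∞)` (the spectrum of `P`). -/
def GoodSymbol (φ : ℝ → ℂ) : Prop :=
  Continuous φ ∧ ∃ C : ℝ, ∀ lam : ℝ, 0 ≤ lam → ‖φ lam‖ ≤ C

/-- The (continuous bounded) functional calculus `φ ↦ φ(P)` of the nonnegative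
self-adjoint operator `P = -div(G∇)`, characterized by: it is linear and
multiplicative on continuous functions bounded on `[0,∞) ⊇ spec(P)`, compatible with
sup-norm bounds and adjoints, only depends on the restriction of the symbol to
`[0,∞)`, and sends `λ ↦ (λ - z)⁻¹` to the resolvent `(P - z)⁻¹`.  These properties
determine `φ(P)` uniquely for every `φ` continuous and vanishing at infinity.
Moreover `0` is not an eigenvalue of `P` (field `ker_triv`). -/
structure SpectralCalc (d : ℕ) (G : Ed d → Fin d → Fin d → ℝ) where
  map : (ℝ → ℂ) → (L2 d →L[ℂ] L2 d)
  map_congr : ∀ φ ψ, GoodSymbol φ → GoodSymbol ψ →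
    (∀ lam : ℝ, 0 ≤ lam → φ lam = ψ lam) → map φ = map ψ
  map_add : ∀ φ ψ, GoodSymbol φ → GoodSymbol ψ →
    map (fun lam => φ lam + ψ lam) = map φ + map ψ
  map_smul : ∀ (c : ℂ) φ, GoodSymbol φ → map (fun lam => c * φ lam) = c • map φ
  map_mul : ∀ φ ψ, GoodSymbol φ → GoodSymbol ψ →
    map (fun lam => φ lam * ψ lam) = (map φ).comp (map ψ)
  map_norm : ∀ (φ) (C : ℝ), (∀ lam : ℝ, 0 ≤ lam → ‖φ lam‖ ≤ C) → ‖map φ‖ ≤ C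
  map_star : ∀ φ, GoodSymbol φ →
    ContinuousLinearMap.adjoint (map φ) = map (fun lam => (starRingEnd ℂ) (φ lam))
  map_resolvent : ∀ z : ℂ, z.im ≠ 0 →
    IsWeakResolvent d G z (map fun lam => ((lam : ℂ) - z)⁻¹)
  ker_triv : ∀ f : L2 d,
    (∀ φ : SchwartzMap (Ed d) ℂ, (∫ x, f x * divGrad d G (⇑φ) x) = 0) → f = 0

/-- `Rj = ∂_j P^{-1/2}` is the `j`-th Riesz transform of `P`, defined as the strong
limit `s-lim_n π^{-1/2} ∂_j ∫_{1/n}^n e^{-tP} dt/√t`; here `gn n` is the vector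
integral `∫_{1/n}^n e^{-tP} f dt/√t` and `wn n` is its distributional `∂_j`
derivative. -/
def RieszOf (d : ℕ) (G : Ed d → Fin d → Fin d → ℝ) (S : SpectralCalc d G) (j : Fin d)
    (Rj : L2 d →L[ℂ] L2 d) : Prop :=
  ∀ (f : L2 d) (gn wn : ℕ → L2 d),
    (∀ n : ℕ, gn n = ∫ t in Set.Icc ((n : ℝ)⁻¹) (n : ℝ),
        ((Real.sqrt t)⁻¹ : ℝ) • (S.map (fun lam => Complex.exp (-(t : ℂ) * ((max lam 0 : ℝ) : ℂ))) f)) →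
    (∀ (n : ℕ) (φ : SchwartzMap (Ed d) ℂ),
        (∫ x, (wn n) x * φ x) = -∫ x, (gn n) x * pd d j (⇑φ) x) →
    Tendsto (fun n : ℕ => ((Real.sqrt Real.pi)⁻¹ : ℝ) • wn n) atTop (𝓝 (Rj f))

/-!
If `ψ = 1` on a neighbourhood of `0` containing the support of `φ`, then
`R_c φ(P/λ) = R_c ψ(P) φ(P/λ)` for `λ ≤ 1`. As `0` is not an eigenvalue of `P`, the operators
`φ(P/λ)` tend to `0` strongly, and since they are normal it is enough that `R_c ψ(P)` be compact.

Let `f_n` tend weakly to `0` in `L²`. The functions `P^{-1/2} ψ(P) f_n`, which in general are not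
in `L²`, are replaced by Schwartz functions `u_n` with `∂_j u_n` close to `R(j) ψ(P) f_n` and
`P u_n` bounded in `L²`. In dimension at least three `|ξ|⁻¹` is locally square integrable, so the
low frequencies of `u_n` are controlled by its gradient and `u_n → 0` in `L²_loc`. The Caccioppoli
inequality then gives `∂_j u_n → 0` in `L²_loc`, hence `b_{jk} R(k) ψ(P) f_n → 0` in `L²`.
-/

namespace RieszLowEnergy

open scoped SchwartzMap InnerProductSpace

variable {d : ℕ}

/-! ### Schwartz functions -/

section Schwartz

/-- The partial derivative `∂_j` on Schwartz functions; `⇑(partialDeriv j u) = pd d j u` holds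
definitionally. -/
def partialDeriv (j : Fin d) : 𝓢(Ed d, ℂ) →L[ℂ] 𝓢(Ed d, ℂ) :=
  LineDeriv.lineDerivOpCLM ℂ 𝓢(Ed d, ℂ) (EuclideanSpace.single j (1 : ℝ))

/-- Multiplication of Schwartz functions by a real function (zero unless that function has
temperate growth). -/
def mulReal (a : Ed d → ℝ) : 𝓢(Ed d, ℂ) →L[ℂ] 𝓢(Ed d, ℂ) :=
  SchwartzMap.smulLeftCLM ℂ fun x => (a x : ℂ)

/-- The partial derivative `∂_j` of a real function. -/
def realPartialDeriv (j : Fin d) (a : Ed d → ℝ) (x : Ed d) : ℝ :=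
  fderiv ℝ a x (EuclideanSpace.single j 1)

/-- The inclusion of Schwartz functions into `L²(ℝ^d)`. -/
def toL2 : 𝓢(Ed d, ℂ) →L[ℂ] L2 d :=
  SchwartzMap.toLpCLM ℂ ℂ 2 volume

/-- Complex conjugation of Schwartz functions. -/
def conjSchwartz : 𝓢(Ed d, ℂ) →L[ℝ] 𝓢(Ed d, ℂ) :=
  SchwartzMap.postcompCLM (𝕜 := ℝ) (Complex.conjCLE : ℂ →L[ℝ] ℂ)

lemma partialDeriv_apply (j : Fin d) (u : 𝓢(Ed d, ℂ)) (x : Ed d) :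
    partialDeriv j u x = fderiv ℝ u x (EuclideanSpace.single j 1) := rfl

lemma partialDeriv_comm (j k : Fin d) (u : 𝓢(Ed d, ℂ)) :
    partialDeriv j (partialDeriv k u) = partialDeriv k (partialDeriv j u) := by
  simp only [partialDeriv, LineDeriv.lineDerivOpCLM_apply,
    SchwartzMap.lineDeriv_eq_fourierMultiplierCLM, map_smul]
  rw [SchwartzMap.fourierMultiplierCLM_fourierMultiplierCLM_apply (by fun_prop) (by fun_prop),
    SchwartzMap.fourierMultiplierCLM_fourierMultiplierCLM_apply (by fun_prop) (by fun_prop),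
    mul_comm (inner ℝ · _)]

lemma fourier_partialDeriv_apply (j : Fin d) (u : 𝓢(Ed d, ℂ)) (ξ : Ed d) :
    𝓕 (partialDeriv j u) ξ = 2 * π * I * (ξ j * 𝓕 u ξ) := by
  have h := SchwartzMap.fourier_lineDerivOp_eq u (EuclideanSpace.single j (1 : ℝ) : Ed d)
  rw [partialDeriv, LineDeriv.lineDerivOpCLM_apply, h, smul_apply,
    SchwartzMap.smulLeftCLM_apply_apply (by fun_prop)]
  simp [EuclideanSpace.inner_single_right]

section Coefficients

variable {a : Ed d → ℝ}

lemma mulReal_apply (ha : a.HasTemperateGrowth) (u : 𝓢(Ed d, ℂ)) (x : Ed d) :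
    mulReal a u x = a x * u x :=
  SchwartzMap.smulLeftCLM_apply_apply (Function.Complex.hasTemperateGrowth_ofReal.comp ha) u x

lemma hasTemperateGrowth_realPartialDeriv (ha : a.HasTemperateGrowth) (j : Fin d) :
    (realPartialDeriv j a).HasTemperateGrowth := by
  have hfderiv : (fderiv ℝ a).HasTemperateGrowth := by
    refine ⟨ha.1.fderiv_right (by simp), fun n => ?_⟩
    obtain ⟨k, C, hC⟩ := ha.2 (n + 1)
    exact ⟨k, C, fun x => by simpa only [norm_iteratedFDeriv_fderiv] using hC x⟩
  exact (ContinuousLinearMap.apply ℝ ℝ (EuclideanSpace.single j (1 : ℝ))).hasTemperateGrowth.comp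
    hfderiv

lemma partialDeriv_mulReal (ha : a.HasTemperateGrowth) (j : Fin d) (u : 𝓢(Ed d, ℂ)) :
    partialDeriv j (mulReal a u)
      = mulReal a (partialDeriv j u) + mulReal (realPartialDeriv j a) u := by
  ext x
  have hcoe : ⇑(mulReal a u) = (fun y => (a y : ℂ)) * ⇑u := funext (mulReal_apply ha u)
  have ha' : HasFDerivAt (fun y => (a y : ℂ)) (Complex.ofRealCLM.comp (fderiv ℝ a x)) x :=
    Complex.ofRealCLM.hasFDerivAt.comp x (ha.1.differentiable (by simp) x).hasFDerivAt
  rw [partialDeriv_apply, hcoe, (ha'.mul (u.hasFDerivAt x)).fderiv]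
  simp [realPartialDeriv, partialDeriv_apply, mulReal_apply ha,
    mulReal_apply (hasTemperateGrowth_realPartialDeriv ha j), mul_comm]

lemma mulReal_mulReal {b : Ed d → ℝ} (ha : a.HasTemperateGrowth) (hb : b.HasTemperateGrowth)
    (u : 𝓢(Ed d, ℂ)) : mulReal a (mulReal b u) = mulReal (fun x => a x * b x) u := by
  ext x
  rw [mulReal_apply ha, mulReal_apply hb, mulReal_apply (a := fun x => a x * b x) (ha.mul hb),
    Complex.ofReal_mul, mul_assoc]

end Coefficients

@[simp]
lemma conjSchwartz_apply (u : 𝓢(Ed d, ℂ)) (x : Ed d) : conjSchwartz u x = conj (u x) := rfl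

@[simp]
lemma conjSchwartz_conjSchwartz (u : 𝓢(Ed d, ℂ)) : conjSchwartz (conjSchwartz u) = u := by
  ext x; simp

lemma partialDeriv_conjSchwartz (j : Fin d) (u : 𝓢(Ed d, ℂ)) :
    partialDeriv j (conjSchwartz u) = conjSchwartz (partialDeriv j u) := by
  ext x
  have h : HasFDerivAt (conjSchwartz u) ((Complex.conjCLE : ℂ →L[ℝ] ℂ).comp (fderiv ℝ u x)) x :=
    (Complex.conjCLE : ℂ →L[ℝ] ℂ).hasFDerivAt.comp x (u.hasFDerivAt x)
  rw [partialDeriv_apply, h.fderiv]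
  rfl

lemma mulReal_conjSchwartz {a : Ed d → ℝ} (ha : a.HasTemperateGrowth) (u : 𝓢(Ed d, ℂ)) :
    mulReal a (conjSchwartz u) = conjSchwartz (mulReal a u) := by
  ext x
  simp [mulReal_apply ha]

/-! ### Schwartz functions in `L²` -/

lemma coeFn_toL2 (u : 𝓢(Ed d, ℂ)) : toL2 u =ᵐ[volume] u := u.coeFn_toLp 2 volume

lemma denseRange_toL2 : DenseRange (toL2 : 𝓢(Ed d, ℂ) → L2 d) :=
  SchwartzMap.denseRange_toLpCLM (F := ℂ) ENNReal.ofNat_ne_top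

lemma inner_toL2_left (u : 𝓢(Ed d, ℂ)) (f : L2 d) : ⟪toL2 u, f⟫_ℂ = ∫ x, f x * conj (u x) := by
  rw [L2.inner_def]
  refine integral_congr_ae ?_
  filter_upwards [coeFn_toL2 u] with x hx
  rw [hx]
  rfl

lemma inner_toL2_right (f : L2 d) (u : 𝓢(Ed d, ℂ)) : ⟪f, toL2 u⟫_ℂ = ∫ x, conj (f x) * u x := by
  rw [L2.inner_def]
  refine integral_congr_ae ?_
  filter_upwards [coeFn_toL2 u] with x hx
  rw [hx, RCLike.inner_apply, mul_comm]

lemma inner_toL2_toL2 (u v : 𝓢(Ed d, ℂ)) : ⟪toL2 u, toL2 v⟫_ℂ = ∫ x, conj (u x) * v x :=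
  (SchwartzMap.inner_toL2_toL2_eq u v volume).trans <| by simp [mul_comm]

lemma integrable_conj_mul (u v : 𝓢(Ed d, ℂ)) : Integrable fun x => conj (u x) * v x :=
  MemLp.integrable_mul (p := 2) (q := 2) ((conjSchwartz u).memLp 2 volume) (v.memLp 2 volume)

lemma integrable_norm_sq (u : 𝓢(Ed d, ℂ)) : Integrable fun x => ‖u x‖ ^ 2 :=
  (u.memLp 2 volume).integrable_norm_pow (by norm_num)

lemma norm_toL2_sq (u : 𝓢(Ed d, ℂ)) : ‖toL2 u‖ ^ 2 = ∫ x, ‖u x‖ ^ 2 := by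
  have h : ⟪toL2 u, toL2 u⟫_ℂ = ((∫ x, ‖u x‖ ^ 2 : ℝ) : ℂ) := by
    rw [inner_toL2_toL2, ← integral_complex_ofReal]
    simp_rw [Complex.conj_mul', Complex.ofReal_pow]
  rw [inner_self_eq_norm_sq_to_K] at h
  exact Complex.ofReal_injective (by simpa using h)

lemma norm_toL2_mulReal_le {a : Ed d → ℝ} (ha : a.HasTemperateGrowth) {C : ℝ}
    (hC : ∀ x, |a x| ≤ C) (u : 𝓢(Ed d, ℂ)) : ‖toL2 (mulReal a u)‖ ≤ C * ‖toL2 u‖ := by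
  refine Lp.norm_le_mul_norm_of_ae_le_mul ?_
  filter_upwards [coeFn_toL2 u, coeFn_toL2 (mulReal a u)] with x hu hau
  rw [hu, hau, mulReal_apply ha, norm_mul, Complex.norm_real]
  exact mul_le_mul_of_nonneg_right (hC x) (norm_nonneg _)

lemma inner_toL2_partialDeriv (j : Fin d) (u v : 𝓢(Ed d, ℂ)) :
    ⟪toL2 u, toL2 (partialDeriv j v)⟫_ℂ = -⟪toL2 (partialDeriv j u), toL2 v⟫_ℂ := by
  have h := SchwartzMap.integral_mul_lineDerivOp_right_eq_neg_left (μ := volume) (conjSchwartz u) v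
    (EuclideanSpace.single j (1 : ℝ) : Ed d)
  have hconj : LineDeriv.lineDerivOp (EuclideanSpace.single j (1 : ℝ) : Ed d) (conjSchwartz u)
      = conjSchwartz (partialDeriv j u) := partialDeriv_conjSchwartz j u
  rw [hconj] at h
  rw [inner_toL2_toL2, inner_toL2_toL2]
  exact h

lemma inner_toL2_mulReal {a : Ed d → ℝ} (ha : a.HasTemperateGrowth) (u v : 𝓢(Ed d, ℂ)) :
    ⟪toL2 u, toL2 (mulReal a v)⟫_ℂ = ⟪toL2 (mulReal a u), toL2 v⟫_ℂ := by
  simp only [inner_toL2_toL2, mulReal_apply ha, map_mul, Complex.conj_ofReal]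
  congr with x
  ring

end Schwartz

/-! ### The elliptic operator on Schwartz functions -/

section Elliptic

/-- Real coefficients of temperate growth that are bounded by `K` together with their first
derivatives, and whose quadratic form is bounded below by `c > 0`. -/
structure IsEllipticCoef (G : Ed d → Fin d → Fin d → ℝ) (c K : ℝ) : Prop where
  hasTemperateGrowth : ∀ j k, (fun x => G x j k).HasTemperateGrowth
  pos : 0 < c
  le_quadraticForm : ∀ (x : Ed d) (v : Fin d → ℝ),
    c * ∑ j, v j ^ 2 ≤ ∑ j, ∑ k, G x j k * v j * v k
  abs_le : ∀ j k x, |G x j k| ≤ K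
  abs_partialDeriv_le : ∀ l j k x, |realPartialDeriv l (fun y => G y j k) x| ≤ K

/-- The operator `-∑_{j,k} ∂_j G_{jk} ∂_k` on Schwartz functions. -/
def ellipticOp (G : Ed d → Fin d → Fin d → ℝ) : 𝓢(Ed d, ℂ) →L[ℂ] 𝓢(Ed d, ℂ) :=
  -∑ j, ∑ k, partialDeriv j ∘L mulReal (fun x => G x j k) ∘L partialDeriv k

/-- The operator `1 - Δ` on Schwartz functions. -/
def oneSubLaplacian : 𝓢(Ed d, ℂ) →L[ℂ] 𝓢(Ed d, ℂ) :=
  ContinuousLinearMap.id ℂ _ - ∑ l, partialDeriv l ∘L partialDeriv l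

/-- The `H²` norm of a Schwartz function. -/
def sobolevNorm (u : 𝓢(Ed d, ℂ)) : ℝ :=
  √(‖toL2 u‖ ^ 2 + ∑ k, ‖toL2 (partialDeriv k u)‖ ^ 2
    + ∑ l, ∑ j, ‖toL2 (partialDeriv j (partialDeriv l u))‖ ^ 2)

variable {G : Ed d → Fin d → Fin d → ℝ} {c K : ℝ}

lemma hasTemperateGrowth_of_cbSmooth {a : Ed d → ℝ} (ha : CbSmooth d a) :
    a.HasTemperateGrowth := by
  refine ⟨ha.1, fun n => ?_⟩
  obtain ⟨C, hC⟩ := ha.2 n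
  exact ⟨0, C, fun x => by simpa using hC x⟩

lemma exists_abs_realPartialDeriv_le {a : Ed d → ℝ} (ha : CbSmooth d a) (j : Fin d) :
    ∃ C, ∀ x, |realPartialDeriv j a x| ≤ C := by
  obtain ⟨C, hC⟩ := ha.2 1
  refine ⟨C, fun x => ?_⟩
  have hfderiv : ‖fderiv ℝ a x‖ ≤ C := by
    simpa only [norm_iteratedFDeriv_one] using hC x
  have hsingle := (fderiv ℝ a x).le_opNorm (EuclideanSpace.single j (1 : ℝ))
  rw [PiLp.norm_single, norm_one, mul_one] at hsingle
  exact hsingle.trans hfderiv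

lemma exists_isEllipticCoef (hG : Standing d G) : ∃ c K, IsEllipticCoef G c K := by
  obtain ⟨hsmooth, -, c, Λ, hc, hform⟩ := hG
  have hbound : ∀ᶠ K in atTop, ∀ j k x, |G x j k| ≤ K := by
    simp only [eventually_all]
    intro j k
    obtain ⟨C, hC⟩ := (hsmooth j k).2 0
    filter_upwards [eventually_ge_atTop C] with K hK x
    exact le_trans (by simpa using hC x) hK
  have hderiv : ∀ᶠ K in atTop, ∀ l j k x, |realPartialDeriv l (fun y => G y j k) x| ≤ K := by
    simp only [eventually_all]
    intro l j k
    obtain ⟨C, hC⟩ := exists_abs_realPartialDeriv_le (hsmooth j k) l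
    filter_upwards [eventually_ge_atTop C] with K hK x using (hC x).trans hK
  obtain ⟨K, hK, hK'⟩ := (hbound.and hderiv).exists
  exact ⟨c, K, fun j k => hasTemperateGrowth_of_cbSmooth (hsmooth j k), hc,
    fun x v => (hform x v).1, hK, hK'⟩

lemma ellipticOp_apply (u : 𝓢(Ed d, ℂ)) : ellipticOp G u
    = -∑ j, ∑ k, partialDeriv j (mulReal (fun x => G x j k) (partialDeriv k u)) := by
  simp [ellipticOp]

lemma coe_ellipticOp (hG : IsEllipticCoef G c K) (u : 𝓢(Ed d, ℂ)) :
    ⇑(ellipticOp G u) = divGrad d G u := by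
  funext x
  have hterm : ∀ j k, ⇑(mulReal (fun x => G x j k) (partialDeriv k u))
      = fun y => (G y j k : ℂ) * fderiv ℝ u y (EuclideanSpace.single k 1) :=
    fun j k => funext fun y => mulReal_apply (hG.hasTemperateGrowth j k) _ y
  simp [ellipticOp_apply, divGrad, divGradC, partialDeriv_apply, hterm]

lemma ellipticOp_conjSchwartz (hG : IsEllipticCoef G c K) (u : 𝓢(Ed d, ℂ)) :
    ellipticOp G (conjSchwartz u) = conjSchwartz (ellipticOp G u) := by
  simp only [ellipticOp_apply, map_neg, map_sum, partialDeriv_conjSchwartz,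
    mulReal_conjSchwartz (hG.hasTemperateGrowth _ _)]

lemma inner_toL2_ellipticOp (u v : 𝓢(Ed d, ℂ)) : ⟪toL2 u, toL2 (ellipticOp G v)⟫_ℂ
    = ∑ j, ∑ k, ⟪toL2 (partialDeriv j u),
        toL2 (mulReal (fun x => G x j k) (partialDeriv k v))⟫_ℂ := by
  simp only [ellipticOp_apply, map_neg, map_sum, inner_neg_right, inner_sum,
    inner_toL2_partialDeriv, Finset.sum_neg_distrib, neg_neg]

lemma le_quadraticForm_complex (hG : IsEllipticCoef G c K) (x : Ed d) (v : Fin d → ℂ) :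
    c * ∑ j, ‖v j‖ ^ 2 ≤ ∑ j, ∑ k, (conj (v j) * (G x j k * v k)).re := by
  have hnorm : ∑ j, ‖v j‖ ^ 2 = ∑ j, (v j).re ^ 2 + ∑ j, (v j).im ^ 2 := by
    rw [← Finset.sum_add_distrib]
    refine Finset.sum_congr rfl fun j _ => ?_
    rw [← Complex.normSq_eq_norm_sq, Complex.normSq_apply, sq, sq]
  have hform : ∑ j, ∑ k, (conj (v j) * (G x j k * v k)).re =
      ∑ j, ∑ k, G x j k * (v j).re * (v k).re + ∑ j, ∑ k, G x j k * (v j).im * (v k).im := by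
    simp only [← Finset.sum_add_distrib]
    refine Finset.sum_congr rfl fun j _ => Finset.sum_congr rfl fun k _ => ?_
    simp
    ring
  rw [hnorm, hform, mul_add]
  exact add_le_add (hG.le_quadraticForm x _) (hG.le_quadraticForm x _)

lemma mul_sum_norm_toL2_sq_le (hG : IsEllipticCoef G c K) (v : Fin d → 𝓢(Ed d, ℂ)) :
    c * ∑ j, ‖toL2 (v j)‖ ^ 2
      ≤ (∑ j, ∑ k, ⟪toL2 (v j), toL2 (mulReal (fun x => G x j k) (v k))⟫_ℂ).re := by
  have hint : ∀ j k, Integrable fun x => conj (v j x) * (G x j k * v k x) := fun j k => by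
    simpa only [mulReal_apply (hG.hasTemperateGrowth j k)] using
      integrable_conj_mul (v j) (mulReal (fun x => G x j k) (v k))
  have hint_re : ∀ j k, Integrable fun x => (conj (v j x) * (G x j k * v k x)).re :=
    fun j k => (hint j k).re
  have hlower : c * ∑ j, ‖toL2 (v j)‖ ^ 2 = ∫ x, c * ∑ j, ‖v j x‖ ^ 2 := by
    rw [integral_const_mul, integral_finsetSum _ fun j _ => integrable_norm_sq (v j)]
    simp only [norm_toL2_sq]
  have hform : (∑ j, ∑ k, ⟪toL2 (v j), toL2 (mulReal (fun x => G x j k) (v k))⟫_ℂ).re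
      = ∫ x, ∑ j, ∑ k, (conj (v j x) * (G x j k * v k x)).re := by
    rw [integral_finsetSum _ fun j _ => integrable_finsetSum _ fun k _ => hint_re j k]
    simp only [Complex.re_sum]
    refine Finset.sum_congr rfl fun j _ => ?_
    rw [integral_finsetSum _ fun k _ => hint_re j k]
    refine Finset.sum_congr rfl fun k _ => ?_
    simp only [inner_toL2_toL2, mulReal_apply (hG.hasTemperateGrowth j k)]
    exact (integral_re (hint j k)).symm
  rw [hlower, hform]
  exact integral_mono
    ((integrable_finsetSum _ fun j _ => integrable_norm_sq (v j)).const_mul c)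
    (integrable_finsetSum _ fun j _ => integrable_finsetSum _ fun k _ => hint_re j k)
    fun x => le_quadraticForm_complex hG x fun j => v j x

lemma energy_le_re_inner_ellipticOp (hG : IsEllipticCoef G c K) (u : 𝓢(Ed d, ℂ)) :
    c * ∑ j, ‖toL2 (partialDeriv j u)‖ ^ 2 ≤ (⟪toL2 u, toL2 (ellipticOp G u)⟫_ℂ).re := by
  rw [inner_toL2_ellipticOp]
  exact mul_sum_norm_toL2_sq_le hG fun j => partialDeriv j u

lemma oneSubLaplacian_apply (u : 𝓢(Ed d, ℂ)) :
    oneSubLaplacian u = u - ∑ l, partialDeriv l (partialDeriv l u) := by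
  simp [oneSubLaplacian]

lemma inner_toL2_oneSubLaplacian (u v : 𝓢(Ed d, ℂ)) : ⟪toL2 (oneSubLaplacian u), toL2 v⟫_ℂ
    = ⟪toL2 u, toL2 v⟫_ℂ + ∑ l, ⟪toL2 (partialDeriv l u), toL2 (partialDeriv l v)⟫_ℂ := by
  rw [oneSubLaplacian_apply, map_sub, map_sum, inner_sub_left, sum_inner, sub_eq_add_neg,
    ← Finset.sum_neg_distrib]
  simp only [inner_toL2_partialDeriv]

open Laplacian in
lemma oneSubLaplacian_eq_fourierMultiplierCLM (u : 𝓢(Ed d, ℂ)) : oneSubLaplacian u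
    = SchwartzMap.fourierMultiplierCLM ℂ (fun ξ : Ed d => 1 + (2 * π) ^ 2 * ‖ξ‖ ^ 2) u := by
  have hlap : ∑ l, partialDeriv l (partialDeriv l u) = Δ u := by
    simp [SchwartzMap.laplacian_eq_sum (EuclideanSpace.basisFun (Fin d) ℝ), partialDeriv]
  rw [oneSubLaplacian_apply, hlap, SchwartzMap.laplacian_eq_fourierMultiplierCLM]
  apply (FourierTransform.fourierCLE ℂ 𝓢(Ed d, ℂ)).injective
  ext ξ
  have hsq : (fun ξ : Ed d => ‖ξ‖ ^ 2).HasTemperateGrowth := by fun_prop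
  have hsymbol : (fun ξ : Ed d => 1 + (2 * π) ^ 2 * ‖ξ‖ ^ 2).HasTemperateGrowth := by fun_prop
  simp [SchwartzMap.fourierMultiplierCLM_apply, SchwartzMap.smulLeftCLM_apply_apply hsq,
    SchwartzMap.smulLeftCLM_apply_apply hsymbol, add_mul, mul_assoc]

lemma surjective_oneSubLaplacian :
    Function.Surjective (oneSubLaplacian : 𝓢(Ed d, ℂ) → 𝓢(Ed d, ℂ)) := by
  have hsymbol : (fun ξ : Ed d => (1 + (2 * π) ^ 2 * ‖ξ‖ ^ 2)).HasTemperateGrowth := by fun_prop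
  have hinv : (fun ξ : Ed d => (1 + ‖(2 * π) • ξ‖ ^ 2) ^ (-1 : ℝ)).HasTemperateGrowth :=
    (Function.hasTemperateGrowth_one_add_norm_sq_rpow (Ed d) (-1)).comp
      ((2 * π) • ContinuousLinearMap.id ℝ (Ed d)).hasTemperateGrowth
  have hone : ((fun ξ : Ed d => (1 + (2 * π) ^ 2 * ‖ξ‖ ^ 2))
      * fun ξ : Ed d => (1 + ‖(2 * π) • ξ‖ ^ 2) ^ (-1 : ℝ)) = fun _ => 1 := by
    funext ξ
    rw [Pi.mul_apply, Real.rpow_neg_one, norm_smul, mul_pow ‖_‖, Real.norm_eq_abs, sq_abs]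
    exact mul_inv_cancel₀ (by positivity)
  intro ψ
  refine ⟨SchwartzMap.fourierMultiplierCLM ℂ
    (fun ξ : Ed d => (1 + ‖(2 * π) • ξ‖ ^ 2) ^ (-1 : ℝ)) ψ, ?_⟩
  rw [oneSubLaplacian_eq_fourierMultiplierCLM,
    SchwartzMap.fourierMultiplierCLM_fourierMultiplierCLM_apply hsymbol hinv, hone,
    SchwartzMap.fourierMultiplierCLM_const, one_smul, ContinuousLinearMap.id_apply]

end Elliptic

/-! ### Coercivity in `H²` and density of the range -/

section Coercivity

variable {G : Ed d → Fin d → Fin d → ℝ} {c K : ℝ}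

lemma sobolevNorm_nonneg (u : 𝓢(Ed d, ℂ)) : 0 ≤ sobolevNorm u := Real.sqrt_nonneg _

lemma sobolevNorm_sq (u : 𝓢(Ed d, ℂ)) : sobolevNorm u ^ 2
    = ‖toL2 u‖ ^ 2 + ∑ k, ‖toL2 (partialDeriv k u)‖ ^ 2
      + ∑ l, ∑ j, ‖toL2 (partialDeriv j (partialDeriv l u))‖ ^ 2 :=
  Real.sq_sqrt (by positivity)

lemma norm_toL2_le_sobolevNorm (u : 𝓢(Ed d, ℂ)) : ‖toL2 u‖ ≤ sobolevNorm u :=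
  Real.le_sqrt_of_sq_le <| by
    rw [add_assoc]
    exact le_add_of_nonneg_right (by positivity)

lemma norm_toL2_partialDeriv_le_sobolevNorm (u : 𝓢(Ed d, ℂ)) (k : Fin d) :
    ‖toL2 (partialDeriv k u)‖ ≤ sobolevNorm u := by
  refine Real.le_sqrt_of_sq_le ?_
  have hk := Finset.single_le_sum (f := fun k => ‖toL2 (partialDeriv k u)‖ ^ 2)
    (fun _ _ => by positivity) (Finset.mem_univ k)
  have hsecond : 0 ≤ ∑ l, ∑ j, ‖toL2 (partialDeriv j (partialDeriv l u))‖ ^ 2 :=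
    Finset.sum_nonneg fun _ _ => Finset.sum_nonneg fun _ _ => sq_nonneg _
  linarith [sq_nonneg ‖toL2 u‖]

lemma norm_toL2_partialDeriv_partialDeriv_le_sobolevNorm (u : 𝓢(Ed d, ℂ)) (j l : Fin d) :
    ‖toL2 (partialDeriv j (partialDeriv l u))‖ ≤ sobolevNorm u := by
  refine Real.le_sqrt_of_sq_le ?_
  have hj := Finset.single_le_sum
    (f := fun j => ‖toL2 (partialDeriv j (partialDeriv l u))‖ ^ 2)
    (fun _ _ => by positivity) (Finset.mem_univ j)
  have hl := Finset.single_le_sum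
    (f := fun l => ∑ j, ‖toL2 (partialDeriv j (partialDeriv l u))‖ ^ 2)
    (fun _ _ => by positivity) (Finset.mem_univ l)
  have hlower : 0 ≤ ‖toL2 u‖ ^ 2 + ∑ k, ‖toL2 (partialDeriv k u)‖ ^ 2 := by positivity
  linarith

lemma norm_toL2_oneSubLaplacian_le (u : 𝓢(Ed d, ℂ)) :
    ‖toL2 (oneSubLaplacian u)‖ ≤ (1 + d) * sobolevNorm u := by
  rw [oneSubLaplacian_apply, map_sub, map_sum]
  calc ‖toL2 u - ∑ l, toL2 (partialDeriv l (partialDeriv l u))‖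
      ≤ ‖toL2 u‖ + ∑ l, ‖toL2 (partialDeriv l (partialDeriv l u))‖ :=
        (norm_sub_le _ _).trans (add_le_add_right (norm_sum_le _ _) _)
    _ ≤ sobolevNorm u + ∑ _l : Fin d, sobolevNorm u :=
        add_le_add (norm_toL2_le_sobolevNorm u) (Finset.sum_le_sum fun l _ =>
          norm_toL2_partialDeriv_partialDeriv_le_sobolevNorm u l l)
    _ = (1 + d) * sobolevNorm u := by
        rw [Finset.sum_const, Finset.card_univ, Fintype.card_fin, nsmul_eq_mul]
        ring

lemma norm_toL2_ellipticOp_le (hG : IsEllipticCoef G c K) (u : 𝓢(Ed d, ℂ)) :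
    ‖toL2 (ellipticOp G u)‖ ≤ d ^ 2 * (2 * K) * sobolevNorm u := by
  have hterm : ∀ j k, ‖toL2 (partialDeriv j (mulReal (fun x => G x j k) (partialDeriv k u)))‖
      ≤ 2 * K * sobolevNorm u := by
    intro j k
    have hK : 0 ≤ K := (abs_nonneg _).trans (hG.abs_le j k 0)
    rw [partialDeriv_mulReal (hG.hasTemperateGrowth j k), map_add, two_mul, add_mul]
    refine (norm_add_le _ _).trans (add_le_add ?_ ?_)
    · exact (norm_toL2_mulReal_le (hG.hasTemperateGrowth j k) (hG.abs_le j k) _).trans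
        (mul_le_mul_of_nonneg_left
          (norm_toL2_partialDeriv_partialDeriv_le_sobolevNorm u j k) hK)
    · exact (norm_toL2_mulReal_le
        (hasTemperateGrowth_realPartialDeriv (hG.hasTemperateGrowth j k) j)
        (hG.abs_partialDeriv_le j j k) _).trans
        (mul_le_mul_of_nonneg_left (norm_toL2_partialDeriv_le_sobolevNorm u k) hK)
  simp only [ellipticOp_apply, map_neg, norm_neg, map_sum]
  calc _ ≤ ∑ _j : Fin d, ∑ _k : Fin d, 2 * K * sobolevNorm u :=
        norm_sum_le_of_le _ fun j _ => norm_sum_le_of_le _ fun k _ => hterm j k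
    _ = d ^ 2 * (2 * K) * sobolevNorm u := by
        simp only [Finset.sum_const, Finset.card_univ, Fintype.card_fin, nsmul_eq_mul]
        ring

lemma partialDeriv_ellipticOp (hG : IsEllipticCoef G c K) (l : Fin d) (u : 𝓢(Ed d, ℂ)) :
    partialDeriv l (ellipticOp G u) = ellipticOp G (partialDeriv l u)
      - ∑ j, ∑ k, partialDeriv j
          (mulReal (realPartialDeriv l fun x => G x j k) (partialDeriv k u)) := by
  simp only [ellipticOp_apply, map_neg, map_sum, ← neg_add', ← Finset.sum_add_distrib]
  congr 1
  refine Finset.sum_congr rfl fun j _ => Finset.sum_congr rfl fun k _ => ?_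
  rw [partialDeriv_comm, partialDeriv_mulReal (hG.hasTemperateGrowth j k), map_add,
    partialDeriv_comm l k]

lemma re_inner_toL2_commutator_le (hG : IsEllipticCoef G c K) (l : Fin d) (u : 𝓢(Ed d, ℂ)) :
    (⟪toL2 (partialDeriv l u), toL2 (∑ j, ∑ k, partialDeriv j
        (mulReal (realPartialDeriv l fun x => G x j k) (partialDeriv k u)))⟫_ℂ).re
      ≤ c / 2 * ∑ j, ‖toL2 (partialDeriv j (partialDeriv l u))‖ ^ 2
        + d ^ 2 * K ^ 2 / (2 * c) * ∑ k, ‖toL2 (partialDeriv k u)‖ ^ 2 := by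
  have hd : 0 < (d : ℝ) := by exact_mod_cast l.pos
  have hc := hG.pos
  have hyoung : ∀ s t : ℝ, s * (K * t) ≤ c / (2 * d) * s ^ 2 + d * K ^ 2 / (2 * c) * t ^ 2 := by
    intro s t
    have hsq : c / (2 * d) * s ^ 2 + d * K ^ 2 / (2 * c) * t ^ 2 - s * (K * t)
        = (c * s - d * K * t) ^ 2 / (2 * d * c) := by field_simp; ring
    have : 0 ≤ (c * s - d * K * t) ^ 2 / (2 * d * c) := by positivity
    linarith
  have hterm : ∀ j k, (⟪toL2 (partialDeriv l u), toL2 (partialDeriv j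
        (mulReal (realPartialDeriv l fun x => G x j k) (partialDeriv k u)))⟫_ℂ).re
      ≤ c / (2 * d) * ‖toL2 (partialDeriv j (partialDeriv l u))‖ ^ 2
        + d * K ^ 2 / (2 * c) * ‖toL2 (partialDeriv k u)‖ ^ 2 := by
    intro j k
    rw [inner_toL2_partialDeriv]
    refine (Complex.re_le_norm _).trans ?_
    rw [norm_neg]
    refine (norm_inner_le_norm _ _).trans (le_trans ?_ (hyoung _ _))
    exact mul_le_mul_of_nonneg_left (norm_toL2_mulReal_le
      (hasTemperateGrowth_realPartialDeriv (hG.hasTemperateGrowth j k) l)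
      (hG.abs_partialDeriv_le l j k) _) (norm_nonneg _)
  simp only [map_sum, inner_sum, Complex.re_sum]
  refine (Finset.sum_le_sum fun j _ => Finset.sum_le_sum fun k _ => hterm j k).trans_eq ?_
  simp only [Finset.sum_add_distrib, Finset.sum_const, Finset.card_univ, Fintype.card_fin,
    nsmul_eq_mul, ← Finset.mul_sum]
  field_simp

lemma le_re_inner_partialDeriv_ellipticOp (hG : IsEllipticCoef G c K) (l : Fin d)
    (u : 𝓢(Ed d, ℂ)) :
    c / 2 * ∑ j, ‖toL2 (partialDeriv j (partialDeriv l u))‖ ^ 2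
        - d ^ 2 * K ^ 2 / (2 * c) * ∑ k, ‖toL2 (partialDeriv k u)‖ ^ 2
      ≤ (⟪toL2 (partialDeriv l u), toL2 (partialDeriv l (ellipticOp G u))⟫_ℂ).re := by
  rw [partialDeriv_ellipticOp hG, map_sub, inner_sub_right, Complex.sub_re]
  linarith [energy_le_re_inner_ellipticOp hG (partialDeriv l u),
    re_inner_toL2_commutator_le hG l u]

/-- Testing `(P + κ) u` against `(1 - Δ) u` controls all second derivatives: the commutators
`[∂_l, P]` only cost first derivatives, which the shift `κ` absorbs. -/
lemma exists_coercive_sobolevNorm (hG : IsEllipticCoef G c K) : ∃ κ : ℝ, 0 < κ ∧ ∃ m : ℝ, 0 < m ∧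
    ∀ u : 𝓢(Ed d, ℂ), m * sobolevNorm u ^ 2
      ≤ (⟪toL2 (oneSubLaplacian u), toL2 (ellipticOp G u + (κ : ℂ) • u)⟫_ℂ).re := by
  have hc := hG.pos
  set M : ℝ := d * (d ^ 2 * K ^ 2 / (2 * c)) with hM
  have hM0 : 0 ≤ M := by positivity
  refine ⟨1 + M, by positivity, min 1 (c / 2), lt_min one_pos (half_pos hc), fun u => ?_⟩
  have henergy := energy_le_re_inner_ellipticOp hG u
  have hsecond := Finset.sum_le_sum fun l (_ : l ∈ Finset.univ) =>
    le_re_inner_partialDeriv_ellipticOp hG l u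
  rw [Finset.sum_sub_distrib, Finset.sum_const, Finset.card_univ, Fintype.card_fin, nsmul_eq_mul,
    ← Finset.mul_sum, ← mul_assoc, ← hM] at hsecond
  have hself : ∀ v : 𝓢(Ed d, ℂ), (⟪toL2 v, toL2 v⟫_ℂ).re = ‖toL2 v‖ ^ 2 := fun v =>
    inner_self_eq_norm_sq (𝕜 := ℂ) (toL2 v)
  rw [map_add, inner_add_right, map_smul, inner_smul_right, inner_toL2_oneSubLaplacian,
    inner_toL2_oneSubLaplacian, sobolevNorm_sq]
  simp only [Complex.add_re, Complex.re_ofReal_mul, Complex.re_sum, hself]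
  have hA₀ : 0 ≤ ‖toL2 u‖ ^ 2 := sq_nonneg _
  have hA₁ : 0 ≤ ∑ k, ‖toL2 (partialDeriv k u)‖ ^ 2 := Finset.sum_nonneg fun _ _ => sq_nonneg _
  have hA₂ : 0 ≤ ∑ l, ∑ j, ‖toL2 (partialDeriv j (partialDeriv l u))‖ ^ 2 :=
    Finset.sum_nonneg fun _ _ => Finset.sum_nonneg fun _ _ => sq_nonneg _
  generalize ‖toL2 u‖ ^ 2 = A₀ at *
  generalize ∑ k, ‖toL2 (partialDeriv k u)‖ ^ 2 = A₁ at *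
  generalize ∑ l, ∑ j, ‖toL2 (partialDeriv j (partialDeriv l u))‖ ^ 2 = A₂ at *
  have hmin₁ := mul_le_mul_of_nonneg_right (min_le_left 1 (c / 2)) (add_nonneg hA₀ hA₁)
  have hmin₂ := mul_le_mul_of_nonneg_right (min_le_right 1 (c / 2)) hA₂
  linarith [mul_nonneg hM0 hA₀, mul_nonneg hc.le hA₁]

lemma exists_norm_toL2_le_mul_norm_sub (hG : IsEllipticCoef G c K) : ∃ κ : ℝ, 0 < κ ∧ ∃ C : ℝ,
    ∀ f : L2 d, (∀ u, ⟪f, toL2 (ellipticOp G u + (κ : ℂ) • u)⟫_ℂ = 0) →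
      ∀ ψ : 𝓢(Ed d, ℂ), ‖toL2 ψ‖ ≤ C * ‖toL2 ψ - f‖ := by
  obtain ⟨κ, hκ, m, hm, hcoercive⟩ := exists_coercive_sobolevNorm hG
  set B : ℝ := |d ^ 2 * (2 * K)| + κ
  refine ⟨κ, hκ, (1 + d) * (B / m), fun f hf ψ => ?_⟩
  obtain ⟨u, rfl⟩ := surjective_oneSubLaplacian ψ
  have hupper : ‖toL2 (ellipticOp G u + (κ : ℂ) • u)‖ ≤ B * sobolevNorm u := by
    rw [map_add, map_smul, add_mul]
    refine (norm_add_le _ _).trans (add_le_add ((norm_toL2_ellipticOp_le hG u).trans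
      (mul_le_mul_of_nonneg_right (le_abs_self _) (sobolevNorm_nonneg u))) ?_)
    rw [norm_smul, Complex.norm_real, Real.norm_of_nonneg hκ.le]
    exact mul_le_mul_of_nonneg_left (norm_toL2_le_sobolevNorm u) hκ.le
  have hlower : m * sobolevNorm u ^ 2
      ≤ ‖toL2 (oneSubLaplacian u) - f‖ * (B * sobolevNorm u) := by
    refine (hcoercive u).trans ?_
    rw [← sub_zero ⟪_, _⟫_ℂ, ← hf u, ← inner_sub_left]
    exact (Complex.re_le_norm _).trans <| (norm_inner_le_norm _ _).trans <|
      mul_le_mul_of_nonneg_left hupper (norm_nonneg _)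
  have hsobolev : sobolevNorm u ≤ B / m * ‖toL2 (oneSubLaplacian u) - f‖ := by
    rcases (sobolevNorm_nonneg u).eq_or_lt with h0 | h0
    · rw [← h0]
      positivity
    · rw [div_mul_eq_mul_div, le_div_iff₀ hm]
      nlinarith
  calc ‖toL2 (oneSubLaplacian u)‖ ≤ (1 + d) * sobolevNorm u := norm_toL2_oneSubLaplacian_le u
    _ ≤ (1 + d) * (B / m * ‖toL2 (oneSubLaplacian u) - f‖) := by gcongr
    _ = (1 + d) * (B / m) * ‖toL2 (oneSubLaplacian u) - f‖ := by ring

lemma exists_denseRange_ellipticOp_add (hG : IsEllipticCoef G c K) : ∃ κ : ℝ, 0 < κ ∧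
    DenseRange fun u => toL2 (ellipticOp G u + (κ : ℂ) • u) := by
  obtain ⟨κ, hκ, C, hC⟩ := exists_norm_toL2_le_mul_norm_sub hG
  let A : 𝓢(Ed d, ℂ) →L[ℂ] L2 d := toL2 ∘L (ellipticOp G + (κ : ℂ) • ContinuousLinearMap.id ℂ _)
  refine ⟨κ, hκ, ?_⟩
  suffices h : A.range.topologicalClosure = ⊤ from
    Submodule.dense_iff_topologicalClosure_eq_top.2 h
  rw [Submodule.topologicalClosure_eq_top_iff, Submodule.eq_bot_iff]
  intro f hf
  have horth : ∀ u, ⟪f, toL2 (ellipticOp G u + (κ : ℂ) • u)⟫_ℂ = 0 := fun u =>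
    (Submodule.mem_orthogonal' _ _).1 hf _ ⟨u, rfl⟩
  have hbound : ∀ g : L2 d, ‖g‖ ≤ C * ‖g - f‖ := fun g =>
    denseRange_toL2.induction_on (p := fun g : L2 d => ‖g‖ ≤ C * ‖g - f‖) g
      (isClosed_le (by fun_prop) (by fun_prop)) (hC f horth)
  simpa using hbound f

end Coercivity

/-! ### The functional calculus on Schwartz functions -/

section GoodSymbol

variable {ρ σ : ℝ → ℂ}

lemma goodSymbol_const (z : ℂ) : GoodSymbol fun _ => z := ⟨continuous_const, ‖z‖, fun _ _ => le_rfl⟩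

lemma goodSymbol_add (hρ : GoodSymbol ρ) (hσ : GoodSymbol σ) : GoodSymbol fun s => ρ s + σ s := by
  obtain ⟨hρc, C, hC⟩ := hρ
  obtain ⟨hσc, D, hD⟩ := hσ
  exact ⟨hρc.add hσc, C + D, fun s hs => (norm_add_le _ _).trans (add_le_add (hC s hs) (hD s hs))⟩

lemma goodSymbol_mul (hρ : GoodSymbol ρ) (hσ : GoodSymbol σ) : GoodSymbol fun s => ρ s * σ s := by
  obtain ⟨hρc, C, hC⟩ := hρ
  obtain ⟨hσc, D, hD⟩ := hσ
  refine ⟨hρc.mul hσc, C * D, fun s hs => ?_⟩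
  rw [norm_mul]
  exact mul_le_mul (hC s hs) (hD s hs) (norm_nonneg _) ((norm_nonneg _).trans (hC s hs))

lemma goodSymbol_of_hasCompactSupport (hρ : Continuous ρ) (hsupp : HasCompactSupport ρ) :
    GoodSymbol ρ :=
  have ⟨C, hC⟩ := hρ.bounded_above_of_compact_support hsupp
  ⟨hρ, C, fun s _ => hC s⟩

lemma ofReal_sub_ne_zero {z : ℂ} (hz : z.im ≠ 0) (s : ℝ) : (s : ℂ) - z ≠ 0 := fun h =>
  hz <| by simpa using congrArg Complex.im h

lemma goodSymbol_inv_sub {z : ℂ} (hz : z.im ≠ 0) : GoodSymbol fun s : ℝ => ((s : ℂ) - z)⁻¹ := by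
  refine ⟨Continuous.inv₀ (by fun_prop) (ofReal_sub_ne_zero hz), |z.im|⁻¹, fun s _ => ?_⟩
  rw [norm_inv]
  refine inv_anti₀ (abs_pos.2 hz) ?_
  simpa using Complex.abs_im_le_norm ((s : ℂ) - z)

/-- The symbol `s ↦ (s⁺ + κ)⁻¹` of the resolvent `(P + κ)⁻¹`. The positive part makes it continuous
on the whole line when `κ > 0`; only its values on `[0, ∞)` matter. -/
def invAdd (κ s : ℝ) : ℂ := ((max s 0 + κ : ℝ) : ℂ)⁻¹

variable {κ : ℝ}

lemma ofReal_max_add_ne_zero (hκ : 0 < κ) (s : ℝ) : ((max s 0 + κ : ℝ) : ℂ) ≠ 0 := by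
  have : 0 < max s 0 + κ := by positivity
  exact_mod_cast this.ne'

lemma norm_invAdd_le (hκ : 0 < κ) (s : ℝ) : ‖invAdd κ s‖ ≤ κ⁻¹ := by
  rw [invAdd, norm_inv, Complex.norm_real, Real.norm_of_nonneg (by positivity)]
  exact inv_anti₀ hκ (le_add_of_nonneg_left (le_max_right s 0))

lemma goodSymbol_invAdd (hκ : 0 < κ) : GoodSymbol (invAdd κ) :=
  ⟨Continuous.inv₀ (by fun_prop) (ofReal_max_add_ne_zero hκ), κ⁻¹, fun s _ => norm_invAdd_le hκ s⟩

end GoodSymbol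

section FunctionalCalculus

variable {G : Ed d → Fin d → Fin d → ℝ} {c K : ℝ}

lemma integral_mul_eq_inner (f : L2 d) (u : 𝓢(Ed d, ℂ)) :
    ∫ x, f x * u x = ⟪toL2 (conjSchwartz u), f⟫_ℂ := by
  simp [inner_toL2_left]

lemma inner_ellipticOp_sub_resolvent (hG : IsEllipticCoef G c K) {z : ℂ} {R : L2 d →L[ℂ] L2 d}
    (hR : IsWeakResolvent d G z R) (f : L2 d) (u : 𝓢(Ed d, ℂ)) :
    ⟪toL2 (ellipticOp G u), R f⟫_ℂ - z * ⟪toL2 u, R f⟫_ℂ = ⟪toL2 u, f⟫_ℂ := by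
  simpa only [← coe_ellipticOp hG, integral_mul_eq_inner, ← ellipticOp_conjSchwartz hG,
    conjSchwartz_conjSchwartz] using hR f (conjSchwartz u)

lemma eq_zero_of_inner_ellipticOp_eq_zero (S : SpectralCalc d G) (hG : IsEllipticCoef G c K)
    {f : L2 d} (hf : ∀ u, ⟪toL2 (ellipticOp G u), f⟫_ℂ = 0) : f = 0 :=
  S.ker_triv f fun u => by
    rw [← coe_ellipticOp hG, integral_mul_eq_inner, ← ellipticOp_conjSchwartz hG, hf]

variable (S : SpectralCalc d G)

lemma map_inv_sub_ellipticOp (hG : IsEllipticCoef G c K) {z : ℂ} (hz : z.im ≠ 0)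
    (u : 𝓢(Ed d, ℂ)) :
    S.map (fun s => ((s : ℂ) - z)⁻¹) (toL2 (ellipticOp G u - z • u)) = toL2 u := by
  have hz' : (conj z).im ≠ 0 := by simpa using hz
  have hadjoint : S.map (fun s => ((s : ℂ) - z)⁻¹)
      = ContinuousLinearMap.adjoint (S.map fun s => ((s : ℂ) - conj z)⁻¹) := by
    rw [S.map_star _ (goodSymbol_inv_sub hz')]
    simp
  refine ext_inner_right ℂ fun f => ?_
  rw [hadjoint, ContinuousLinearMap.adjoint_inner_left,
    ← inner_ellipticOp_sub_resolvent hG (S.map_resolvent _ hz') f u, map_sub, inner_sub_left,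
    map_smul, inner_smul_left]

lemma map_const_one (hG : IsEllipticCoef G c K) :
    S.map (fun _ => 1) = ContinuousLinearMap.id ℂ (L2 d) := by
  have hI : (I : ℂ).im ≠ 0 := by simp
  refine ContinuousLinearMap.coeFn_injective <|
    denseRange_toL2.equalizer (S.map _).continuous continuous_id (funext fun u => ?_)
  have hmul := S.map_mul (fun _ => 1) _ (goodSymbol_const 1) (goodSymbol_inv_sub hI)
  simp only [one_mul] at hmul
  have happly := congrArg (fun A => A (toL2 (ellipticOp G u - I • u))) hmul
  simpa only [ContinuousLinearMap.comp_apply, map_inv_sub_ellipticOp S hG hI,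
    Function.comp_apply, ContinuousLinearMap.id_apply] using happly.symm

lemma map_one_add_mul_apply (hG : IsEllipticCoef G c K) {ρ : ℝ → ℂ} (hρ : GoodSymbol ρ) (z : ℂ)
    (f : L2 d) : S.map (fun s => 1 + z * ρ s) f = f + z • S.map ρ f := by
  rw [S.map_add _ (fun s => z * ρ s) (goodSymbol_const 1) (goodSymbol_mul (goodSymbol_const z) hρ),
    S.map_smul _ _ hρ, map_const_one S hG]
  rfl

lemma map_invAdd_ellipticOp (hG : IsEllipticCoef G c K) {κ : ℝ} (hκ : 0 < κ) (u : 𝓢(Ed d, ℂ)) :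
    S.map (invAdd κ) (toL2 (ellipticOp G u + (κ : ℂ) • u)) = toL2 u := by
  have hI : (I : ℂ).im ≠ 0 := by simp
  have hgood : GoodSymbol fun s => 1 + (-(κ + I)) * invAdd κ s :=
    goodSymbol_add (goodSymbol_const 1) (goodSymbol_mul (goodSymbol_const _) (goodSymbol_invAdd hκ))
  have hresolvent : S.map (invAdd κ) = (S.map fun s => 1 + (-(κ + I)) * invAdd κ s).comp
      (S.map fun s => ((s : ℂ) - I)⁻¹) := by
    rw [← S.map_mul _ _ hgood (goodSymbol_inv_sub hI)]
    refine S.map_congr _ _ (goodSymbol_invAdd hκ) (goodSymbol_mul hgood (goodSymbol_inv_sub hI))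
      fun s hs => ?_
    have hκs := ofReal_max_add_ne_zero hκ s
    have hIs := ofReal_sub_ne_zero hI s
    rw [invAdd]
    rw [max_eq_left hs] at hκs ⊢
    push_cast at hκs ⊢
    field_simp
    ring
  have hshift : S.map (invAdd κ) (toL2 (ellipticOp G u - I • u))
      = toL2 u + (-(κ + I) : ℂ) • S.map (invAdd κ) (toL2 u) := by
    conv_lhs => rw [hresolvent]
    rw [ContinuousLinearMap.comp_apply, map_inv_sub_ellipticOp S hG hI,
      map_one_add_mul_apply S hG (goodSymbol_invAdd hκ)]
  have hsplit : ellipticOp G u + (κ : ℂ) • u = (ellipticOp G u - I • u) + (κ + I : ℂ) • u := by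
    rw [add_smul]; abel
  rw [hsplit, map_add, map_add, hshift, map_smul, map_smul, neg_smul]
  abel

lemma adjoint_map_invAdd {κ : ℝ} (hκ : 0 < κ) :
    ContinuousLinearMap.adjoint (S.map (invAdd κ)) = S.map (invAdd κ) := by
  rw [S.map_star _ (goodSymbol_invAdd hκ)]
  congr with s
  rw [invAdd, map_inv₀, Complex.conj_ofReal]

/-! ### Approximation of resolvents by Schwartz functions -/

/-- `w` is the weak partial derivative `∂_j g` in `L²`, tested against Schwartz functions. -/
def IsWeakPartial (j : Fin d) (g w : L2 d) : Prop :=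
  ∀ v : 𝓢(Ed d, ℂ), ∫ x, w x * v x = -∫ x, g x * pd d j v x

lemma isWeakPartial_of_tendsto {j : Fin d} {u : ℕ → 𝓢(Ed d, ℂ)} {g w : L2 d}
    (hg : Tendsto (fun n => toL2 (u n)) atTop (𝓝 g))
    (hw : Tendsto (fun n => toL2 (partialDeriv j (u n))) atTop (𝓝 w)) : IsWeakPartial j g w := by
  intro v
  have hpd : pd d j v = partialDeriv j v := rfl
  rw [hpd, integral_mul_eq_inner, integral_mul_eq_inner, ← partialDeriv_conjSchwartz]
  refine tendsto_nhds_unique (tendsto_const_nhds.inner hw)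
    ((tendsto_const_nhds.inner hg).neg.congr fun n => ?_)
  rw [inner_toL2_partialDeriv]

lemma norm_toL2_partialDeriv_le_norm_ellipticOp_add (hG : IsEllipticCoef G c K) {κ : ℝ}
    (hκ : 0 < κ) (k : Fin d) (u : 𝓢(Ed d, ℂ)) :
    ‖toL2 (partialDeriv k u)‖ ≤ √((c * κ)⁻¹) * ‖toL2 (ellipticOp G u + (κ : ℂ) • u)‖ := by
  have hc := hG.pos
  set g := toL2 (ellipticOp G u + (κ : ℂ) • u) with hg
  have hself : (⟪toL2 u, toL2 u⟫_ℂ).re = ‖toL2 u‖ ^ 2 := inner_self_eq_norm_sq (𝕜 := ℂ) (toL2 u)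
  have hinner : (⟪toL2 u, toL2 (ellipticOp G u)⟫_ℂ).re + κ * ‖toL2 u‖ ^ 2 ≤ ‖toL2 u‖ * ‖g‖ := by
    refine le_trans (le_of_eq ?_)
      ((Complex.re_le_norm _).trans (norm_inner_le_norm (𝕜 := ℂ) (toL2 u) g))
    rw [hg, map_add, map_smul, inner_add_right, inner_smul_right, Complex.add_re,
      Complex.re_ofReal_mul, hself]
  have hsingle := Finset.single_le_sum (f := fun k => ‖toL2 (partialDeriv k u)‖ ^ 2)
    (fun _ _ => sq_nonneg _) (Finset.mem_univ k)
  have hyoung : ‖toL2 u‖ * ‖g‖ ≤ κ * ‖toL2 u‖ ^ 2 + κ⁻¹ * ‖g‖ ^ 2 := by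
    have hsq : κ * ‖toL2 u‖ ^ 2 + κ⁻¹ * ‖g‖ ^ 2 - 2 * (‖toL2 u‖ * ‖g‖)
        = κ⁻¹ * (κ * ‖toL2 u‖ - ‖g‖) ^ 2 := by field_simp; ring
    have hpos : 0 ≤ κ⁻¹ * (κ * ‖toL2 u‖ - ‖g‖) ^ 2 := by positivity
    linarith [mul_nonneg (norm_nonneg (toL2 u)) (norm_nonneg g)]
  have hsq : ‖toL2 (partialDeriv k u)‖ ^ 2 ≤ (c * κ)⁻¹ * ‖g‖ ^ 2 := by
    rw [mul_inv, mul_assoc, inv_mul_eq_div c, le_div_iff₀' hc]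
    linarith [mul_le_mul_of_nonneg_left hsingle hc.le, energy_le_re_inner_ellipticOp hG u]
  rw [← Real.sqrt_sq (norm_nonneg g), ← Real.sqrt_mul (by positivity)]
  exact Real.le_sqrt_of_sq_le hsq

lemma exists_tendsto_map_invAdd (hG : IsEllipticCoef G c K) {κ : ℝ} (hκ : 0 < κ)
    (hdense : DenseRange fun u => toL2 (ellipticOp G u + (κ : ℂ) • u)) (f : L2 d) :
    ∃ u : ℕ → 𝓢(Ed d, ℂ),
      Tendsto (fun n => toL2 (ellipticOp G (u n))) atTop (𝓝 (f - (κ : ℂ) • S.map (invAdd κ) f)) ∧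
      ∀ k, ∃ w, Tendsto (fun n => toL2 (partialDeriv k (u n))) atTop (𝓝 w) ∧
        IsWeakPartial k (S.map (invAdd κ) f) w := by
  obtain ⟨y, hy, hlim⟩ := mem_closure_iff_seq_limit.1 (hdense f)
  choose u hu using hy
  obtain rfl : (fun n => toL2 (ellipticOp G (u n) + (κ : ℂ) • u n)) = y := funext hu
  have hlim_u : Tendsto (fun n => toL2 (u n)) atTop (𝓝 (S.map (invAdd κ) f)) :=
    (((S.map (invAdd κ)).continuous.tendsto f).comp hlim).congr fun n =>
      map_invAdd_ellipticOp S hG hκ (u n)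
  refine ⟨u, ?_, fun k => ?_⟩
  · simpa only [map_add, map_smul, add_sub_cancel_right] using
      hlim.sub (hlim_u.const_smul (κ : ℂ))
  have hcauchy : CauchySeq fun n => toL2 (partialDeriv k (u n)) := by
    have hdist := (cauchySeq_iff_tendsto_dist_atTop_0.1 hlim.cauchySeq).const_mul √((c * κ)⁻¹)
    rw [mul_zero] at hdist
    refine cauchySeq_iff_tendsto_dist_atTop_0.2
      (squeeze_zero (fun _ => dist_nonneg) (fun n => ?_) hdist)
    rw [dist_eq_norm, dist_eq_norm, ← map_sub, ← map_sub, ← map_sub, add_sub_add_comm, ← map_sub,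
      ← smul_sub]
    exact norm_toL2_partialDeriv_le_norm_ellipticOp_add hG hκ k _
  obtain ⟨w, hw⟩ := cauchySeq_tendsto_of_complete hcauchy
  exact ⟨w, hw, isWeakPartial_of_tendsto hlim_u hw⟩

/-! ### Strong convergence at low energies -/

lemma tendsto_zero_of_denseRange {ι E F : Type*} [NormedAddCommGroup E] [NormedSpace ℂ E]
    [NormedAddCommGroup F] [NormedSpace ℂ F] {l : Filter ι} {A : ι → E →L[ℂ] F}
    {T : E →L[ℂ] E} (hT : DenseRange T) {C : ℝ} (hA : ∀ i, ‖A i‖ ≤ C)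
    (hAT : Tendsto (fun i => ‖(A i).comp T‖) l (𝓝 0)) (f : E) :
    Tendsto (fun i => A i f) l (𝓝 0) := by
  have hequi : Equicontinuous fun i => A i :=
    (LipschitzWith.uniformEquicontinuous _ C.toNNReal fun i =>
      (A i).lipschitz.weaken (NNReal.le_toNNReal_of_coe_le (hA i))).equicontinuous
  refine hT.induction_on (p := fun f => Tendsto (fun i => A i f) l (𝓝 0)) f
    (hequi.isClosed_setOfPred_tendsto continuous_const) fun g => ?_
  refine squeeze_zero_norm (fun i => ((A i).comp T).le_opNorm g) ?_
  simpa only [zero_mul] using hAT.mul_const ‖g‖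

/-- The symbol `s ↦ s⁺ / (s⁺ + 1)` of `P (P + 1)⁻¹`, which vanishes at zero energy. -/
def lowWeight (s : ℝ) : ℂ := 1 + (-1) * invAdd 1 s

lemma goodSymbol_lowWeight : GoodSymbol lowWeight :=
  goodSymbol_add (goodSymbol_const 1)
    (goodSymbol_mul (goodSymbol_const (-1)) (goodSymbol_invAdd one_pos))

lemma norm_lowWeight_le {s : ℝ} (hs : 0 ≤ s) : ‖lowWeight s‖ ≤ s := by
  have heq : lowWeight s = ((s / (s + 1) : ℝ) : ℂ) := by
    have hs1 : (s : ℂ) + 1 ≠ 0 := by exact_mod_cast (by positivity : s + 1 ≠ 0)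
    rw [lowWeight, invAdd, max_eq_left hs]
    push_cast
    field_simp
    ring
  rw [heq, Complex.norm_real, Real.norm_of_nonneg (by positivity)]
  exact div_le_self hs (by linarith)

lemma map_lowWeight_apply (hG : IsEllipticCoef G c K) (f : L2 d) :
    S.map lowWeight f = f - S.map (invAdd 1) f :=
  (map_one_add_mul_apply S hG (goodSymbol_invAdd one_pos) (-1) f).trans <| by
    rw [neg_one_smul, sub_eq_add_neg]

/-- The range is dense because `0` is not an eigenvalue of `P`. -/
lemma denseRange_map_lowWeight (hG : IsEllipticCoef G c K) : DenseRange (S.map lowWeight) := by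
  have hadjoint : ContinuousLinearMap.adjoint (S.map lowWeight) = S.map lowWeight := by
    rw [S.map_star _ goodSymbol_lowWeight]
    congr with s
    simp [lowWeight, invAdd]
  suffices h : (S.map lowWeight).range.topologicalClosure = ⊤ from
    Submodule.dense_iff_topologicalClosure_eq_top.2 h
  rw [Submodule.topologicalClosure_eq_top_iff, ContinuousLinearMap.orthogonal_range, hadjoint,
    Submodule.eq_bot_iff]
  intro f hf
  have hfix : S.map (invAdd 1) f = f := by
    have hker : S.map lowWeight f = 0 := hf
    rw [map_lowWeight_apply S hG, sub_eq_zero] at hker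
    exact hker.symm
  refine eq_zero_of_inner_ellipticOp_eq_zero S hG fun u => ?_
  have hshift : ⟪toL2 (ellipticOp G u + ((1 : ℝ) : ℂ) • u), f⟫_ℂ = ⟪toL2 u, f⟫_ℂ := by
    conv_lhs => rw [← hfix, ← adjoint_map_invAdd S one_pos,
      ContinuousLinearMap.adjoint_inner_right, map_invAdd_ellipticOp S hG one_pos]
  simpa [inner_add_left] using hshift

lemma goodSymbol_comp_div {φ : ℝ → ℂ} (hφ : Continuous φ) (hsupp : HasCompactSupport φ) (lam : ℝ) :
    GoodSymbol fun s => φ (s / lam) :=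
  have ⟨C, hC⟩ := hφ.bounded_above_of_compact_support hsupp
  ⟨by fun_prop, C, fun _ _ => hC _⟩

lemma exists_norm_map_comp_div_le {φ : ℝ → ℂ} (hφ : Continuous φ) (hsupp : HasCompactSupport φ) :
    ∃ C, ∀ lam, ‖S.map fun s => φ (s / lam)‖ ≤ C :=
  have ⟨C, hC⟩ := hφ.bounded_above_of_compact_support hsupp
  ⟨C, fun _ => S.map_norm _ _ fun _ _ => hC _⟩

lemma exists_norm_map_comp_div_comp_lowWeight_le {φ : ℝ → ℂ} (hφ : Continuous φ)
    (hsupp : HasCompactSupport φ) :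
    ∃ C, ∀ lam > 0, ‖(S.map fun s => φ (s / lam)).comp (S.map lowWeight)‖ ≤ C * lam := by
  obtain ⟨C, hC⟩ := (hφ.mul continuous_ofReal).bounded_above_of_compact_support hsupp.mul_right
  refine ⟨C, fun lam hlam => ?_⟩
  rw [← S.map_mul _ _ (goodSymbol_comp_div hφ hsupp lam) goodSymbol_lowWeight]
  refine S.map_norm _ _ fun s hs => ?_
  rw [norm_mul]
  calc ‖φ (s / lam)‖ * ‖lowWeight s‖ ≤ ‖φ (s / lam)‖ * s := by gcongr; exact norm_lowWeight_le hs
    _ = ‖φ (s / lam) * (s / lam : ℝ)‖ * lam := by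
        rw [norm_mul, Complex.norm_real, Real.norm_of_nonneg (by positivity), mul_assoc,
          div_mul_cancel₀ s hlam.ne']
    _ ≤ C * lam := by gcongr; exact hC _

lemma tendsto_map_comp_div (hG : IsEllipticCoef G c K) {φ : ℝ → ℂ} (hφ : Continuous φ)
    (hsupp : HasCompactSupport φ) (f : L2 d) :
    Tendsto (fun lam => S.map (fun s => φ (s / lam)) f) (𝓝[>] 0) (𝓝 0) := by
  obtain ⟨B, hB⟩ := exists_norm_map_comp_div_le S hφ hsupp
  obtain ⟨C, hC⟩ := exists_norm_map_comp_div_comp_lowWeight_le S hφ hsupp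
  refine tendsto_zero_of_denseRange (denseRange_map_lowWeight S hG) hB ?_ f
  have hlin : Tendsto (fun lam : ℝ => C * lam) (𝓝[>] 0) (𝓝 0) := by
    have h := (continuous_const_mul C).tendsto 0
    rw [mul_zero] at h
    exact h.mono_left nhdsWithin_le_nhds
  refine squeeze_zero' (Eventually.of_forall fun _ => norm_nonneg _) ?_ hlin
  filter_upwards [self_mem_nhdsWithin] with lam hlam using hC lam hlam

lemma tendsto_adjoint_map_comp_div (hG : IsEllipticCoef G c K) {φ : ℝ → ℂ} (hφ : Continuous φ)
    (hsupp : HasCompactSupport φ) (f : L2 d) :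
    Tendsto (fun lam => ContinuousLinearMap.adjoint (S.map fun s => φ (s / lam)) f)
      (𝓝[>] 0) (𝓝 0) := by
  simp_rw [fun lam => S.map_star _ (goodSymbol_comp_div hφ hsupp lam)]
  exact tendsto_map_comp_div S hG (φ := fun s => conj (φ s)) (by fun_prop)
    (hsupp.comp_left (map_zero conj)) f

end FunctionalCalculus

/-! ### The inverse square root as an integral of the heat semigroup -/

section HeatIntegral

/-- The symbol `s ↦ exp (-t s⁺)` of the heat operator `exp (-t P)`. -/
def heat (t s : ℝ) : ℂ := Complex.exp (-(t : ℂ) * ((max s 0 : ℝ) : ℂ))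

lemma heat_eq_ofReal (t s : ℝ) : heat t s = (Real.exp (-t * max s 0) : ℝ) := by
  rw [heat]; push_cast; rfl

lemma norm_heat (t s : ℝ) : ‖heat t s‖ = Real.exp (-t * max s 0) := by
  rw [heat_eq_ofReal, Complex.norm_real, Real.norm_of_nonneg (Real.exp_nonneg _)]

lemma goodSymbol_heat {t : ℝ} (ht : 0 ≤ t) : GoodSymbol (heat t) := by
  refine ⟨by unfold heat; fun_prop, 1, fun s hs => ?_⟩
  rw [norm_heat, Real.exp_le_one_iff, neg_mul]
  exact neg_nonpos.2 (by positivity)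

lemma mul_exp_neg_mul_le_inv {a : ℝ} (ha : 0 < a) (x : ℝ) : x * Real.exp (-a * x) ≤ a⁻¹ := by
  rw [neg_mul, Real.exp_neg, ← div_eq_mul_inv, div_le_iff₀ (Real.exp_pos _), inv_mul_eq_div,
    le_div_iff₀' ha]
  linarith [Real.add_one_le_exp (a * x)]

lemma norm_heat_sub_le {a t t' : ℝ} (ha : 0 < a) (hat : a ≤ t) (htt' : t ≤ t') (s : ℝ) :
    ‖heat t s - heat t' s‖ ≤ a⁻¹ * (t' - t) := by
  have hx : 0 ≤ max s 0 := le_max_right s 0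
  rw [heat_eq_ofReal, heat_eq_ofReal, ← Complex.ofReal_sub, Complex.norm_real]
  generalize max s 0 = x at hx ⊢
  have hsplit : Real.exp (-t * x) - Real.exp (-t' * x) =
      Real.exp (-t * x) * (1 - Real.exp (-((t' - t) * x))) := by
    rw [mul_sub, mul_one, ← Real.exp_add]
    ring_nf
  have hle : Real.exp (-t' * x) ≤ Real.exp (-t * x) := Real.exp_le_exp.2 (by nlinarith)
  rw [Real.norm_of_nonneg (sub_nonneg.2 hle), hsplit]
  calc Real.exp (-t * x) * (1 - Real.exp (-((t' - t) * x)))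
      ≤ Real.exp (-a * x) * ((t' - t) * x) := by
        refine mul_le_mul (Real.exp_le_exp.2 (by nlinarith)) ?_ ?_ (Real.exp_nonneg _)
        · linarith [Real.one_sub_le_exp_neg ((t' - t) * x)]
        · exact sub_nonneg.2 (Real.exp_le_one_iff.2
            (neg_nonpos.2 (mul_nonneg (sub_nonneg.2 htt') hx)))
    _ = x * Real.exp (-a * x) * (t' - t) := by ring
    _ ≤ a⁻¹ * (t' - t) :=
        mul_le_mul_of_nonneg_right (mul_exp_neg_mul_le_inv ha x) (sub_nonneg.2 htt')

variable {G : Ed d → Fin d → Fin d → ℝ} (S : SpectralCalc d G)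

lemma norm_map_heat_sub_le {a t t' : ℝ} (ha : 0 < a) (hat : a ≤ t) (hat' : a ≤ t') :
    ‖S.map (heat t) - S.map (heat t')‖ ≤ a⁻¹ * |t - t'| := by
  wlog htt' : t ≤ t' generalizing t t'
  · rw [norm_sub_rev, abs_sub_comm]
    exact this hat' hat (le_of_not_ge htt')
  have ht := goodSymbol_heat (ha.le.trans hat)
  have ht' := goodSymbol_heat (ha.le.trans hat')
  have hmap : S.map (heat t) - S.map (heat t') = S.map fun s => heat t s + (-1) * heat t' s := by
    rw [S.map_add _ _ ht (goodSymbol_mul (goodSymbol_const (-1)) ht'), S.map_smul _ _ ht', neg_smul,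
      one_smul, sub_eq_add_neg]
  rw [hmap, abs_sub_comm, abs_of_nonneg (sub_nonneg.2 htt')]
  refine S.map_norm _ _ fun s _ => ?_
  rw [neg_one_mul, ← sub_eq_add_neg]
  exact norm_heat_sub_le ha hat htt' s

lemma continuousOn_map_heat {a : ℝ} (ha : 0 < a) :
    ContinuousOn (fun t => S.map (heat t)) (Set.Ici a) :=
  (LipschitzOnWith.of_dist_le_mul (K := ⟨a⁻¹, by positivity⟩) fun t ht t' ht' => by
    rw [dist_eq_norm, Real.dist_eq]
    exact norm_map_heat_sub_le S ha ht ht').continuousOn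

/-- The operator `∫_{1/n}^n exp (-t P) dt / √t`, which is `√π` times a truncation of `P ^ (-1/2)`.
For `n = 0` it vanishes, since then the interval of integration is `{0}`. -/
def truncatedInvSqrt (n : ℕ) : L2 d →L[ℂ] L2 d :=
  ∫ t in Set.Icc (n : ℝ)⁻¹ n, (√t)⁻¹ • S.map (heat t)

lemma integrableOn_heat (n : ℕ) :
    IntegrableOn (fun t => (√t)⁻¹ • S.map (heat t)) (Set.Icc (n : ℝ)⁻¹ n) := by
  rcases n.eq_zero_or_pos with rfl | hn
  · simp [IntegrableOn]
  have hn' : (0 : ℝ) < (n : ℝ)⁻¹ := by positivity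
  refine ContinuousOn.integrableOn_Icc (ContinuousOn.smul
    (ContinuousOn.inv₀ Real.continuous_sqrt.continuousOn ?_)
    ((continuousOn_map_heat S hn').mono Set.Icc_subset_Ici_self))
  exact fun t ht => (Real.sqrt_pos.2 (hn'.trans_le ht.1)).ne'

lemma truncatedInvSqrt_apply (n : ℕ) (f : L2 d) :
    truncatedInvSqrt S n f = ∫ t in Set.Icc (n : ℝ)⁻¹ n, (√t)⁻¹ • S.map (heat t) f :=
  ContinuousLinearMap.integral_apply (integrableOn_heat S n) f

lemma truncatedInvSqrt_comp_map (n : ℕ) {ρ : ℝ → ℂ} (hρ : GoodSymbol ρ) :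
    (truncatedInvSqrt S n).comp (S.map ρ) =
      ∫ t in Set.Icc (n : ℝ)⁻¹ n, (√t)⁻¹ • S.map fun s => heat t s * ρ s := by
  let L := (ContinuousLinearMap.compL ℂ (L2 d) (L2 d) (L2 d)).flip (S.map ρ)
  refine (L.integral_comp_comm (integrableOn_heat S n)).symm.trans
    (setIntegral_congr_fun measurableSet_Icc fun t ht => ?_)
  have ht0 : 0 ≤ t := le_trans (by positivity) ht.1
  simp only [L, ContinuousLinearMap.flip_apply, ContinuousLinearMap.compL_apply,
    ContinuousLinearMap.smul_comp, S.map_mul _ _ (goodSymbol_heat ht0) hρ]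

lemma map_comp_truncatedInvSqrt (n : ℕ) {ρ : ℝ → ℂ} (hρ : GoodSymbol ρ) :
    (S.map ρ).comp (truncatedInvSqrt S n) = (truncatedInvSqrt S n).comp (S.map ρ) := by
  rw [truncatedInvSqrt_comp_map S n hρ]
  let L := ContinuousLinearMap.compL ℂ (L2 d) (L2 d) (L2 d) (S.map ρ)
  refine (L.integral_comp_comm (integrableOn_heat S n)).symm.trans
    (setIntegral_congr_fun measurableSet_Icc fun t ht => ?_)
  have ht0 : 0 ≤ t := le_trans (by positivity) ht.1
  simp only [L, ContinuousLinearMap.compL_apply, ContinuousLinearMap.comp_smul,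
    ← S.map_mul _ _ hρ (goodSymbol_heat ht0), mul_comm (ρ _)]

lemma integrableOn_inv_sqrt_mul_min_one_inv :
    IntegrableOn (fun t : ℝ => (√t)⁻¹ * min 1 t⁻¹) (Set.Ioi 0) := by
  rw [← Set.Ioc_union_Ioi_eq_Ioi zero_le_one]
  refine IntegrableOn.union ?_ ?_
  · have h := (intervalIntegrable_iff_integrableOn_Ioc_of_le zero_le_one).1
      (intervalIntegral.intervalIntegrable_rpow' (a := 0) (b := 1) (r := -1 / 2) (by norm_num))
    refine h.congr_fun (fun t ht => ?_) measurableSet_Ioc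
    have hmin : min 1 t⁻¹ = 1 := min_eq_left ((one_le_inv₀ ht.1).2 ht.2)
    rw [hmin, mul_one, Real.sqrt_eq_rpow, ← Real.rpow_neg ht.1.le, neg_div]
  · have h := integrableOn_Ioi_rpow_of_lt (a := -3 / 2) (by norm_num) (one_pos (α := ℝ))
    refine h.congr_fun (fun t ht => ?_) measurableSet_Ioi
    have ht0 : 0 < t := one_pos.trans ht
    have hmin : min 1 t⁻¹ = t⁻¹ := min_eq_right (inv_le_one_of_one_le₀ (le_of_lt ht))
    rw [hmin, Real.sqrt_eq_rpow, ← Real.rpow_neg ht0.le, ← Real.rpow_neg_one t,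
      ← Real.rpow_add ht0]
    norm_num

lemma norm_heat_mul_le {η : ℝ → ℂ} {M t s : ℝ} (ht : 0 < t) (hM : ‖η s‖ ≤ M)
    (hM' : ‖((max s 0 : ℝ) : ℂ) * η s‖ ≤ M) :
    ‖heat t s * (((max s 0 : ℝ) : ℂ) * η s)‖ ≤ M * min 1 t⁻¹ := by
  have hM0 : 0 ≤ M := (norm_nonneg _).trans hM
  rw [mul_min_of_nonneg _ _ hM0, norm_mul, norm_heat]
  refine le_min ?_ ?_
  · rw [mul_one]
    refine (mul_le_of_le_one_left (norm_nonneg _) (Real.exp_le_one_iff.2 ?_)).trans hM'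
    rw [neg_mul]
    exact neg_nonpos.2 (by positivity)
  · rw [norm_mul, Complex.norm_real, Real.norm_of_nonneg (le_max_right s 0), ← mul_assoc,
      mul_comm (Real.exp _), mul_comm M]
    gcongr
    exact mul_exp_neg_mul_le_inv ht _

lemma exists_norm_truncatedInvSqrt_comp_map_le {η : ℝ → ℂ} (hη : Continuous η)
    (hsupp : HasCompactSupport η) :
    ∃ C, ∀ n, ‖(truncatedInvSqrt S n).comp (S.map fun s => ((max s 0 : ℝ) : ℂ) * η s)‖ ≤ C := by
  obtain ⟨A, hA⟩ := hη.bounded_above_of_compact_support hsupp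
  have hcont : Continuous fun s => ((max s 0 : ℝ) : ℂ) * η s := by fun_prop
  obtain ⟨B, hB⟩ := hcont.bounded_above_of_compact_support hsupp.mul_left
  have hbound : IntegrableOn (fun t : ℝ => max A B * ((√t)⁻¹ * min 1 t⁻¹)) (Set.Ici 0) :=
    Integrable.const_mul ((integrableOn_Ici_iff_integrableOn_Ioi enorm_ne_top).2
      integrableOn_inv_sqrt_mul_min_one_inv) _
  refine ⟨∫ t in Set.Ici 0, max A B * ((√t)⁻¹ * min 1 t⁻¹), fun n => ?_⟩
  rw [truncatedInvSqrt_comp_map S n (goodSymbol_of_hasCompactSupport hcont hsupp.mul_left)]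
  have hsub : Set.Icc (n : ℝ)⁻¹ n ⊆ Set.Ici 0 := fun t ht => le_trans (by positivity) ht.1
  refine (norm_integral_le_of_norm_le (hbound.mono_set hsub) ?_).trans
    (setIntegral_mono_set hbound ?_ hsub.eventuallyLE)
  · filter_upwards [ae_restrict_mem measurableSet_Icc] with t ht
    rcases (Set.mem_Ici.1 (hsub ht)).eq_or_lt with rfl | ht0
    · simp
    rw [norm_smul, Real.norm_of_nonneg (by positivity), mul_left_comm]
    gcongr
    exact S.map_norm _ _ fun s _ => norm_heat_mul_le ht0 ((hA s).trans (le_max_left A B))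
      ((hB s).trans (le_max_right A B))
  · filter_upwards [ae_restrict_mem measurableSet_Ici] with t ht
    have ht0 : 0 ≤ t := ht
    have hAB : 0 ≤ max A B := le_max_of_le_left ((norm_nonneg _).trans (hA 0))
    positivity

/-! ### Riesz transforms -/

lemma map_invAdd_truncatedInvSqrt_add {κ : ℝ} (hκ : 0 < κ) {ψ : ℝ → ℂ} (hψ : GoodSymbol ψ)
    (hmulψ : GoodSymbol fun s => ((max s 0 : ℝ) : ℂ) * ψ s) (n : ℕ) (f : L2 d) :
    S.map (invAdd κ) (truncatedInvSqrt S n (S.map (fun s => ((max s 0 : ℝ) : ℂ) * ψ s) f) +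
      (κ : ℂ) • truncatedInvSqrt S n (S.map ψ f)) = truncatedInvSqrt S n (S.map ψ f) := by
  have hsymbol : ∀ s, invAdd κ s * (((max s 0 : ℝ) : ℂ) * ψ s + κ * ψ s) = ψ s := fun s => by
    rw [← add_mul, ← Complex.ofReal_add, invAdd, inv_mul_cancel_left₀ (ofReal_max_add_ne_zero hκ s)]
  have hκψ := goodSymbol_mul (goodSymbol_const (κ : ℂ)) hψ
  have hfactor := S.map_mul _ _ (goodSymbol_invAdd hκ) (goodSymbol_add hmulψ hκψ)
  simp only [hsymbol, S.map_add _ _ hmulψ hκψ, S.map_smul _ _ hψ] at hfactor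
  rw [← _root_.map_smul, ← map_add]
  exact (DFunLike.congr_fun (map_comp_truncatedInvSqrt S n (goodSymbol_invAdd hκ)) _).trans
    (congrArg (truncatedInvSqrt S n) (DFunLike.congr_fun hfactor f).symm)

lemma exists_schwartz_approx_riesz {c K : ℝ} (hG : IsEllipticCoef G c K)
    {R : Fin d → L2 d →L[ℂ] L2 d} (hR : ∀ j, RieszOf d G S j (R j)) {ψ : ℝ → ℂ}
    (hψ : Continuous ψ) (hsupp : HasCompactSupport ψ) :
    ∃ C, ∀ f, ∀ δ > 0, ∃ u : 𝓢(Ed d, ℂ),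
      (∀ j, ‖toL2 (partialDeriv j u) - R j (S.map ψ f)‖ ≤ δ) ∧
      ‖toL2 (ellipticOp G u)‖ ≤ C * ‖f‖ + δ := by
  obtain ⟨κ, hκ, hdense⟩ := exists_denseRange_ellipticOp_add hG
  obtain ⟨C, hC⟩ := exists_norm_truncatedInvSqrt_comp_map_le S hψ hsupp
  refine ⟨C, fun f δ hδ => ?_⟩
  set g : ℕ → L2 d := fun n => truncatedInvSqrt S n (S.map ψ f)
  set h : ℕ → L2 d := fun n =>
    truncatedInvSqrt S n (S.map (fun s => ((max s 0 : ℝ) : ℂ) * ψ s) f)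
  have hres : ∀ n, S.map (invAdd κ) (h n + (κ : ℂ) • g n) = g n := fun n =>
    map_invAdd_truncatedInvSqrt_add S hκ (goodSymbol_of_hasCompactSupport hψ hsupp)
      (goodSymbol_of_hasCompactSupport (by fun_prop) hsupp.mul_left) n f
  choose u hPu w hw hwg using fun n =>
    exists_tendsto_map_invAdd S hG hκ hdense (h n + (κ : ℂ) • g n)
  simp only [hres, add_sub_cancel_right] at hPu hwg
  have hriesz : ∀ j, Tendsto (fun n => (√π)⁻¹ • w n j) atTop (𝓝 (R j (S.map ψ f))) := fun j =>
    hR j _ g (fun n => w n j) (fun n => truncatedInvSqrt_apply S n _) fun n => hwg n j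
  obtain ⟨n, hn⟩ := (eventually_all.2 fun j => (hriesz j).eventually
    (Metric.ball_mem_nhds _ hδ)).exists
  have hu : ∀ j, Tendsto (fun m => toL2 (partialDeriv j ((((√π)⁻¹ : ℝ) : ℂ) • u n m))) atTop
      (𝓝 ((√π)⁻¹ • w n j)) := fun j =>
    ((hw n j).const_smul (√π)⁻¹).congr fun m => by rw [map_smul, map_smul, Complex.coe_smul]; rfl
  have hPh : Tendsto (fun m => toL2 (ellipticOp G ((((√π)⁻¹ : ℝ) : ℂ) • u n m))) atTop
      (𝓝 ((√π)⁻¹ • h n)) :=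
    ((hPu n).const_smul (√π)⁻¹).congr fun m => by rw [map_smul, map_smul, Complex.coe_smul]; rfl
  have hbound : ‖(√π)⁻¹ • h n‖ < C * ‖f‖ + δ := by
    have hπ : (√π)⁻¹ ≤ 1 :=
      inv_le_one_of_one_le₀ (Real.one_le_sqrt.2 (by linarith [Real.pi_gt_three]))
    rw [norm_smul, Real.norm_of_nonneg (by positivity)]
    calc (√π)⁻¹ * ‖h n‖ ≤ ‖h n‖ := mul_le_of_le_one_left (norm_nonneg _) hπ
      _ ≤ C * ‖f‖ := ContinuousLinearMap.le_of_opNorm_le _ (hC n) f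
      _ < C * ‖f‖ + δ := lt_add_of_pos_right _ hδ
  obtain ⟨m, hm, hmP⟩ := ((eventually_all.2 fun j =>
    ((hu j).sub_const (R j (S.map ψ f))).norm.eventually_le_const
      (by simpa [dist_eq_norm] using hn j)).and (hPh.norm.eventually_le_const hbound)).exists
  exact ⟨_, hm, hmP⟩

end HeatIntegral

/-! ### Completely continuous operators -/

section CompletelyContinuous

variable {E F : Type*} [NormedAddCommGroup E] [InnerProductSpace ℂ E]
  [NormedAddCommGroup F] [InnerProductSpace ℂ F]

/-- Weak convergence of a sequence to `0` in a Hilbert space. -/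
def WeaklyNull (f : ℕ → E) : Prop := ∀ g, Tendsto (fun n => ⟪g, f n⟫_ℂ) atTop (𝓝 0)

lemma weaklyNull_of_tendsto_zero {f : ℕ → E} (hf : Tendsto f atTop (𝓝 0)) : WeaklyNull f :=
  fun g => by simpa using (tendsto_const_nhds (x := g)).inner (𝕜 := ℂ) hf

lemma WeaklyNull.add {f g : ℕ → E} (hf : WeaklyNull f) (hg : WeaklyNull g) :
    WeaklyNull fun n => f n + g n := fun h => by
  simpa only [inner_add_right, add_zero] using (hf h).add (hg h)

lemma WeaklyNull.exists_norm_le [CompleteSpace E] {f : ℕ → E} (hf : WeaklyNull f) :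
    ∃ B, ∀ n, ‖f n‖ ≤ B := by
  obtain ⟨B, hB⟩ := banach_steinhaus (g := fun n => innerSL ℂ (f n)) fun g => by
    obtain ⟨C, hC⟩ := (Metric.isBounded_range_of_tendsto _ (hf g)).exists_norm_le
    exact ⟨C, fun n => by
      rw [innerSL_apply_apply, norm_inner_symm]
      exact hC _ (Set.mem_range_self n)⟩
  exact ⟨B, fun n => by simpa only [innerSL_apply_norm] using hB n⟩

lemma WeaklyNull.map [CompleteSpace E] [CompleteSpace F] {f : ℕ → E} (hf : WeaklyNull f)
    (T : E →L[ℂ] F) : WeaklyNull fun n => T (f n) := fun g => by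
  simpa only [ContinuousLinearMap.adjoint_inner_left] using hf (ContinuousLinearMap.adjoint T g)

/-- A completely continuous operator: one which turns weak convergence of sequences into norm
convergence. By linearity it suffices to require this for sequences converging to `0`. -/
def CompletelyContinuous (K : E →L[ℂ] F) : Prop :=
  ∀ f : ℕ → E, WeaklyNull f → Tendsto (fun n => K (f n)) atTop (𝓝 0)

lemma CompletelyContinuous.neg {K : E →L[ℂ] F} (hK : CompletelyContinuous K) :
    CompletelyContinuous (-K) := fun f hf => by
  simpa using (hK f hf).neg

lemma completelyContinuous_sum {α : Type*} {s : Finset α} {K : α → E →L[ℂ] F}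
    (hK : ∀ a ∈ s, CompletelyContinuous (K a)) : CompletelyContinuous (∑ a ∈ s, K a) :=
  fun f hf => by
    simpa only [sum_apply, Finset.sum_const_zero] using
      tendsto_finsetSum s fun a ha => hK a ha f hf

lemma CompletelyContinuous.comp_left {H : Type*} [NormedAddCommGroup H] [InnerProductSpace ℂ H]
    {K : E →L[ℂ] F} (hK : CompletelyContinuous K) (T : F →L[ℂ] H) :
    CompletelyContinuous (T.comp K) := fun f hf => by
  simpa [Function.comp_def] using (T.continuous.tendsto 0).comp (hK f hf)

lemma CompletelyContinuous.tendsto_norm_comp [CompleteSpace E] {K : E →L[ℂ] F}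
    (hK : CompletelyContinuous K) {ι : Type*} {l : Filter ι} [l.IsCountablyGenerated]
    {A : ι → E →L[ℂ] E}
    (hA : ∀ g, Tendsto (fun i => ContinuousLinearMap.adjoint (A i) g) l (𝓝 0)) :
    Tendsto (fun i => ‖K.comp (A i)‖) l (𝓝 0) := by
  refine tendsto_of_seq_tendsto fun i hi => ?_
  have hnear : ∀ n : ℕ, ∃ x : E, ‖x‖ < 1 ∧
      ‖K.comp (A (i n))‖ - 1 / ((n : ℝ) + 1) < ‖K.comp (A (i n)) x‖ := fun n =>
    (K.comp (A (i n))).exists_lt_apply_of_lt_opNorm (sub_lt_self _ Nat.one_div_pos_of_nat)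
  choose x hx hnorm using hnear
  have hweak : WeaklyNull fun n => A (i n) (x n) := fun g => by
    have hadj : Tendsto (fun n => ‖ContinuousLinearMap.adjoint (A (i n)) g‖) atTop (𝓝 0) := by
      simpa [Function.comp_def] using ((hA g).comp hi).norm
    refine squeeze_zero_norm (fun n => ?_) hadj
    rw [← ContinuousLinearMap.adjoint_inner_left]
    exact (norm_inner_le_norm _ _).trans (mul_le_of_le_one_right (norm_nonneg _) (hx n).le)
  have hlim := (hK _ hweak).norm.add (tendsto_one_div_add_atTop_nhds_zero_nat (𝕜 := ℝ))
  rw [norm_zero, add_zero] at hlim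
  exact squeeze_zero (fun _ => norm_nonneg _) (fun n => (sub_lt_iff_lt_add.1 (hnorm n)).le) hlim

end CompletelyContinuous

/-! ### Local compactness in dimension at least three -/

section LocalCompactness

lemma memLp_indicator_inv_norm (hd : 3 ≤ d) (r : ℝ) :
    MemLp ((Metric.closedBall (0 : Ed d) r).indicator fun ξ => ‖ξ‖⁻¹) 2 volume := by
  have : Nonempty (Fin d) := ⟨⟨0, by omega⟩⟩
  have hmeas : Measurable ((Metric.closedBall (0 : Ed d) r).indicator fun ξ => ‖ξ‖⁻¹) :=
    measurable_norm.inv.indicator measurableSet_closedBall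
  rw [memLp_two_iff_integrable_sq_norm hmeas.aestronglyMeasurable]
  have hradial : Integrable fun ξ : Ed d => (Set.Iic r).indicator (fun s : ℝ => s⁻¹ ^ 2) ‖ξ‖ := by
    refine (integrable_fun_norm_addHaar (volume : Measure (Ed d))
      (f := (Set.Iic r).indicator fun s : ℝ => s⁻¹ ^ 2)).2 ?_
    have hpow : IntegrableOn (fun s : ℝ => s ^ (d - 3)) (Set.Ioc 0 r) :=
      (continuous_pow _).integrableOn_Icc.mono_set Set.Ioc_subset_Icc_self
    refine (hpow.integrable_indicator measurableSet_Ioc).integrableOn.congr_fun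
      (fun s (hs : 0 < s) => ?_) measurableSet_Ioi
    have hdim : d - 1 = d - 3 + 2 := by omega
    simp only [finrank_euclideanSpace_fin, Set.indicator_apply, Set.mem_Ioc, Set.mem_Iic, hs,
      true_and, smul_eq_mul, mul_ite, mul_zero, hdim]
    rw [pow_add, mul_assoc, inv_pow, mul_inv_cancel₀ (pow_ne_zero 2 hs.ne'), mul_one]
  refine hradial.congr (ae_of_all _ fun ξ => ?_)
  by_cases hξ : ‖ξ‖ ≤ r <;> simp [hξ]

variable (θ : ContDiffBump (0 : Ed d))

/-- The frequency cut-off `𝓕⁻¹ θ 𝓕`. -/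
def lowPass (u : 𝓢(Ed d, ℂ)) : 𝓢(Ed d, ℂ) := 𝓕⁻ (mulReal θ (𝓕 u))

/-- The kernels `κ` with `lowPass θ u x = ∑ j, ∫ κ θ x j ξ * 𝓕 (∂_j u) ξ`, obtained by writing
`𝓕 u ξ` as `∑ j, (2πi)⁻¹ |ξ|⁻² ξ_j 𝓕 (∂_j u) ξ`. -/
def lowPassKernel (x : Ed d) (j : Fin d) (ξ : Ed d) : ℂ :=
  cexp ((2 * π * inner ℝ ξ x : ℝ) * I) * θ ξ * ξ j * ((2 * π * I)⁻¹ * ((‖ξ‖ ^ 2 : ℝ) : ℂ)⁻¹)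

lemma hasTemperateGrowth_bump : (θ : Ed d → ℝ).HasTemperateGrowth :=
  θ.hasCompactSupport.hasTemperateGrowth θ.contDiff

lemma norm_lowPassKernel_le (x : Ed d) (j : Fin d) (ξ : Ed d) :
    ‖lowPassKernel θ x j ξ‖
      ≤ ‖(Metric.closedBall (0 : Ed d) θ.rOut).indicator (fun ξ => ‖ξ‖⁻¹) ξ‖ := by
  rw [lowPassKernel]
  by_cases hξ : ξ ∈ Metric.closedBall 0 θ.rOut
  · rw [Set.indicator_of_mem hξ]
    simp only [norm_mul, norm_inv, Complex.norm_exp_ofReal_mul_I, Complex.norm_real, norm_norm,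
      one_mul, norm_pow, Complex.norm_I, mul_one, Complex.norm_ofNat,
      Real.norm_of_nonneg Real.pi_pos.le]
    have hcoord : ‖ξ j‖ ≤ ‖ξ‖ := by simpa using PiLp.norm_apply_le ξ j
    have hθ : ‖θ ξ‖ ≤ 1 := by simpa only [Real.norm_of_nonneg θ.nonneg] using θ.le_one
    have hpi : (2 * π)⁻¹ ≤ 1 := inv_le_one_of_one_le₀ (by linarith [Real.pi_gt_three])
    calc _ ≤ 1 * ‖ξ‖ * (1 * (‖ξ‖ ^ 2)⁻¹) := by gcongr
      _ = ‖ξ‖⁻¹ := by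
        rcases eq_or_ne ‖ξ‖ 0 with h0 | h0
        · simp [h0]
        · field_simp
  · have hθ : θ ξ = 0 := θ.zero_of_le_dist (le_of_not_ge hξ)
    simp [hθ]

lemma memLp_conj_lowPassKernel (hd : 3 ≤ d) (x : Ed d) (j : Fin d) :
    MemLp (fun ξ => conj (lowPassKernel θ x j ξ)) 2 volume := by
  have hmeas : Measurable (lowPassKernel θ x j) := by
    have hθ := θ.continuous
    have hnum : Continuous fun ξ : Ed d =>
        cexp ((2 * π * inner ℝ ξ x : ℝ) * I) * θ ξ * ξ j := by fun_prop
    have hden : Continuous fun ξ : Ed d => ((‖ξ‖ ^ 2 : ℝ) : ℂ) := by fun_prop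
    exact hnum.measurable.mul (hden.measurable.inv.const_mul _)
  refine (memLp_indicator_inv_norm hd θ.rOut).mono
    (Complex.continuous_conj.measurable.comp hmeas).aestronglyMeasurable (ae_of_all _ fun ξ => ?_)
  rw [RCLike.norm_conj]
  exact norm_lowPassKernel_le θ x j ξ

lemma sum_lowPassKernel_mul_fourier_partialDeriv (u : 𝓢(Ed d, ℂ)) (x : Ed d) {ξ : Ed d}
    (hξ : ξ ≠ 0) :
    ∑ j, lowPassKernel θ x j ξ * 𝓕 (partialDeriv j u) ξ
      = cexp ((2 * π * inner ℝ ξ x : ℝ) * I) * (θ ξ * 𝓕 u ξ) := by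
  have hterm : ∀ j, lowPassKernel θ x j ξ * 𝓕 (partialDeriv j u) ξ
      = cexp ((2 * π * inner ℝ ξ x : ℝ) * I) * (θ ξ * 𝓕 u ξ) * ((‖ξ‖ ^ 2 : ℝ) : ℂ)⁻¹
        * ((ξ j ^ 2 : ℝ) : ℂ) := fun j => by
    rw [fourier_partialDeriv_apply, lowPassKernel, Complex.ofReal_pow (ξ j)]
    have hpi := mul_inv_cancel₀ Complex.two_pi_I_ne_zero
    linear_combination cexp ((2 * π * inner ℝ ξ x : ℝ) * I) * (θ ξ * 𝓕 u ξ)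
      * ((‖ξ‖ ^ 2 : ℝ) : ℂ)⁻¹ * ξ j ^ 2 * hpi
  simp_rw [hterm]
  rw [← Finset.mul_sum, ← Complex.ofReal_sum, ← EuclideanSpace.real_norm_sq_eq]
  refine inv_mul_cancel_right₀ ?_ _
  exact_mod_cast pow_ne_zero 2 (norm_ne_zero_iff.2 hξ)

lemma lowPass_apply (hd : 3 ≤ d) (u : 𝓢(Ed d, ℂ)) (x : Ed d) :
    lowPass θ u x
      = ∑ j, ⟪(memLp_conj_lowPassKernel θ hd x j).toLp, toL2 (𝓕 (partialDeriv j u))⟫_ℂ := by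
  have : Nonempty (Fin d) := ⟨⟨0, by omega⟩⟩
  have hκ := memLp_conj_lowPassKernel θ hd x
  have hinner : ∀ j, ⟪(hκ j).toLp, toL2 (𝓕 (partialDeriv j u))⟫_ℂ
      = ∫ ξ, lowPassKernel θ x j ξ * 𝓕 (partialDeriv j u) ξ := fun j => by
    rw [inner_toL2_right]
    refine integral_congr_ae ?_
    filter_upwards [(hκ j).coeFn_toLp] with ξ hξ
    rw [hξ, Complex.conj_conj]
  have hint : ∀ j, Integrable fun ξ => lowPassKernel θ x j ξ * 𝓕 (partialDeriv j u) ξ := fun j =>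
    MemLp.integrable_mul (p := 2) (q := 2)
      (by simpa only [Pi.star_def, RCLike.star_def, Complex.conj_conj] using (hκ j).star)
      ((𝓕 (partialDeriv j u)).memLp 2 volume)
  simp_rw [hinner]
  rw [← integral_finsetSum _ fun j _ => hint j, lowPass, SchwartzMap.fourierInv_coe,
    Real.fourierInv_eq']
  refine integral_congr_ae ?_
  filter_upwards [Measure.ae_ne volume (0 : Ed d)] with ξ hξ
  rw [sum_lowPassKernel_mul_fourier_partialDeriv θ u x hξ,
    mulReal_apply (hasTemperateGrowth_bump θ), smul_eq_mul]

lemma norm_toL2_fourier (u : 𝓢(Ed d, ℂ)) : ‖toL2 (𝓕 u)‖ = ‖toL2 u‖ :=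
  SchwartzMap.norm_fourier_toL2_eq u

lemma WeaklyNull.toL2_fourier {u : ℕ → 𝓢(Ed d, ℂ)} (hu : WeaklyNull fun n => toL2 (u n)) :
    WeaklyNull fun n => toL2 (𝓕 (u n)) := by
  have h := hu.map (Lp.fourierTransformₗᵢ (Ed d) ℂ).toContinuousLinearEquiv.toContinuousLinearMap
  intro g
  refine (h g).congr fun n => ?_
  congr 1
  exact SchwartzMap.toLp_fourier_eq _

variable {u : ℕ → 𝓢(Ed d, ℂ)} {χ : Ed d → ℝ}

lemma tendsto_lowPass_apply (hd : 3 ≤ d)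
    (hu : ∀ j, WeaklyNull fun n => toL2 (partialDeriv j (u n))) (x : Ed d) :
    Tendsto (fun n => lowPass θ (u n) x) atTop (𝓝 0) := by
  simp_rw [lowPass_apply θ hd]
  simpa only [Finset.sum_const_zero] using
    tendsto_finsetSum Finset.univ fun j _ => (hu j).toL2_fourier _

lemma norm_lowPass_apply_le (hd : 3 ≤ d) {B : ℝ} {v : 𝓢(Ed d, ℂ)}
    (hB : ∀ j, ‖toL2 (partialDeriv j v)‖ ≤ B) (x : Ed d) :
    ‖lowPass θ v x‖ ≤ d * (‖(memLp_indicator_inv_norm hd θ.rOut).toLp‖ * B) := by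
  rw [lowPass_apply θ hd]
  calc _ ≤ ∑ _j : Fin d, ‖(memLp_indicator_inv_norm hd θ.rOut).toLp‖ * B := by
        refine (norm_sum_le _ _).trans (Finset.sum_le_sum fun j _ => ?_)
        refine (norm_inner_le_norm _ _).trans ?_
        refine mul_le_mul ?_ ((norm_toL2_fourier _).trans_le (hB j)) (norm_nonneg _) (norm_nonneg _)
        refine Lp.norm_le_norm_of_ae_le ?_
        filter_upwards [(memLp_conj_lowPassKernel θ hd x j).coeFn_toLp,
          (memLp_indicator_inv_norm hd θ.rOut).coeFn_toLp] with ξ hκ hind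
        rw [hκ, hind, RCLike.norm_conj]
        exact norm_lowPassKernel_le θ x j ξ
    _ = _ := by simp

lemma tendsto_toL2_mulReal_lowPass (hd : 3 ≤ d)
    (hu : ∀ j, WeaklyNull fun n => toL2 (partialDeriv j (u n))) (hχ : χ.HasTemperateGrowth)
    (hχc : HasCompactSupport χ) :
    Tendsto (fun n => ‖toL2 (mulReal χ (lowPass θ (u n)))‖) atTop (𝓝 0) := by
  choose B hB using fun j => (hu j).exists_norm_le
  have hbound : ∀ n j, ‖toL2 (partialDeriv j (u n))‖ ≤ ∑ k, |B k| := fun n j =>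
    ((hB j n).trans (le_abs_self _)).trans
      (Finset.single_le_sum (f := fun k => |B k|) (fun k _ => abs_nonneg _) (Finset.mem_univ j))
  have hcont : Continuous χ := hχ.1.continuous
  have hsq : Tendsto (fun n => ‖toL2 (mulReal χ (lowPass θ (u n)))‖ ^ 2) atTop (𝓝 0) := by
    simp_rw [norm_toL2_sq, mulReal_apply hχ, norm_mul, mul_pow, Complex.norm_real,
      Real.norm_eq_abs, sq_abs]
    rw [← integral_zero (Ed d) ℝ]
    refine tendsto_integral_of_dominated_convergence (fun x =>
      χ x ^ 2 * (d * (‖(memLp_indicator_inv_norm hd θ.rOut).toLp‖ * ∑ k, |B k|)) ^ 2) ?_ ?_ ?_ ?_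
    · exact fun n => by fun_prop
    · refine Integrable.mul_const ((hcont.pow 2).integrable_of_hasCompactSupport ?_) _
      simpa only [pow_two] using hχc.mul_left
    · refine fun n => ae_of_all _ fun x => ?_
      rw [Real.norm_of_nonneg (by positivity)]
      gcongr
      exact norm_lowPass_apply_le θ hd (hbound n) x
    · refine ae_of_all _ fun x => ?_
      simpa using ((tendsto_lowPass_apply θ hd hu x).norm.pow 2).const_mul (χ x ^ 2)
  simpa using hsq.sqrt

lemma sum_norm_fourier_partialDeriv_sq (v : 𝓢(Ed d, ℂ)) (ξ : Ed d) :
    ∑ j, ‖𝓕 (partialDeriv j v) ξ‖ ^ 2 = (2 * π * ‖ξ‖) ^ 2 * ‖𝓕 v ξ‖ ^ 2 := by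
  simp only [fourier_partialDeriv_apply, norm_mul, Complex.norm_I, Complex.norm_real,
    Complex.norm_ofNat, Real.norm_of_nonneg Real.pi_pos.le, mul_pow, Real.norm_eq_abs, sq_abs,
    one_mul, EuclideanSpace.real_norm_sq_eq, Finset.mul_sum, Finset.sum_mul, mul_assoc]

lemma norm_sub_bump_mul_sq_le (z : ℂ) (ξ : Ed d) :
    ‖z - θ ξ * z‖ ^ 2 ≤ θ.rIn⁻¹ ^ 2 * ((2 * π * ‖ξ‖) ^ 2 * ‖z‖ ^ 2) := by
  rcases le_or_gt ‖ξ‖ θ.rIn with hξ | hξ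
  · have hθ : θ ξ = 1 := θ.one_of_mem_closedBall (by simpa using hξ)
    rw [hθ, Complex.ofReal_one, one_mul, sub_self, norm_zero, zero_pow two_ne_zero]
    positivity
  · have hθ : ‖z - θ ξ * z‖ ≤ ‖z‖ := by
      have heq : z - θ ξ * z = ((1 - θ ξ : ℝ) : ℂ) * z := by push_cast; ring
      rw [heq, norm_mul, Complex.norm_real, Real.norm_of_nonneg (sub_nonneg.2 θ.le_one)]
      exact mul_le_of_le_one_left (norm_nonneg _) (sub_le_self _ θ.nonneg)
    have hhigh : 1 ≤ θ.rIn⁻¹ * (2 * π * ‖ξ‖) := by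
      rw [inv_mul_eq_div, le_div_iff₀ θ.rIn_pos]
      nlinarith [Real.pi_gt_three, norm_nonneg ξ]
    calc ‖z - θ ξ * z‖ ^ 2 ≤ 1 * ‖z‖ ^ 2 := by rw [one_mul]; gcongr
      _ ≤ (θ.rIn⁻¹ * (2 * π * ‖ξ‖)) ^ 2 * ‖z‖ ^ 2 := by gcongr; exact one_le_pow₀ hhigh
      _ = _ := by ring

lemma norm_toL2_sub_lowPass_sq_le (v : 𝓢(Ed d, ℂ)) :
    ‖toL2 (v - lowPass θ v)‖ ^ 2 ≤ θ.rIn⁻¹ ^ 2 * ∑ j, ‖toL2 (partialDeriv j v)‖ ^ 2 := by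
  have hfourier : 𝓕 (v - lowPass θ v) = 𝓕 v - mulReal θ (𝓕 v) := by
    have hlow : 𝓕 (lowPass θ v) = mulReal θ (𝓕 v) := FourierTransform.fourier_fourierInv_eq _
    rw [← hlow]
    exact map_sub (FourierTransform.fourierCLE ℂ 𝓢(Ed d, ℂ)) v (lowPass θ v)
  rw [← norm_toL2_fourier, hfourier, norm_toL2_sq]
  simp_rw [← norm_toL2_fourier (partialDeriv _ v), norm_toL2_sq]
  rw [← integral_finsetSum _ fun j _ => integrable_norm_sq _, ← integral_const_mul]
  refine integral_mono (integrable_norm_sq _)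
    ((integrable_finsetSum _ fun j _ => integrable_norm_sq _).const_mul _) fun ξ => ?_
  simp only [sub_apply, mulReal_apply (hasTemperateGrowth_bump θ), sum_norm_fourier_partialDeriv_sq]
  exact norm_sub_bump_mul_sq_le θ _ ξ

lemma tendsto_toL2_mulReal (hd : 3 ≤ d)
    (hu : ∀ j, WeaklyNull fun n => toL2 (partialDeriv j (u n))) (hχ : χ.HasTemperateGrowth)
    (hχc : HasCompactSupport χ) : Tendsto (fun n => toL2 (mulReal χ (u n))) atTop (𝓝 0) := by
  choose B hB using fun j => (hu j).exists_norm_le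
  obtain ⟨C, hC⟩ := hχ.1.continuous.bounded_above_of_compact_support hχc
  have hC0 : 0 ≤ C := (norm_nonneg _).trans (hC 0)
  have hhigh : ∀ (θ : ContDiffBump (0 : Ed d)) n,
      ‖toL2 (u n - lowPass θ (u n))‖ ≤ θ.rIn⁻¹ * √(∑ j, B j ^ 2) := fun θ n => by
    refine (sq_le_sq₀ (norm_nonneg _) (by have := θ.rIn_pos; positivity)).1 ?_
    rw [mul_pow, Real.sq_sqrt (by positivity)]
    refine (norm_toL2_sub_lowPass_sq_le θ (u n)).trans ?_
    gcongr with j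
    exact hB j n
  rw [Metric.tendsto_nhds]
  intro ε hε
  obtain ⟨R, hR, hR0⟩ : ∃ R : ℝ, C * (R⁻¹ * √(∑ j, B j ^ 2)) < ε / 2 ∧ 0 < R := by
    have hlim : Tendsto (fun R : ℝ => C * (R⁻¹ * √(∑ j, B j ^ 2))) atTop (𝓝 0) := by
      simpa using (tendsto_inv_atTop_zero.mul_const (√(∑ j, B j ^ 2))).const_mul C
    exact ((hlim.eventually (gt_mem_nhds (half_pos hε))).and (eventually_gt_atTop 0)).exists
  let θ : ContDiffBump (0 : Ed d) := ⟨R, 2 * R, hR0, by linarith⟩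
  filter_upwards [(tendsto_toL2_mulReal_lowPass θ hd hu hχ hχc).eventually
    (gt_mem_nhds (half_pos hε))] with n hn
  rw [dist_zero_right]
  calc ‖toL2 (mulReal χ (u n))‖
      = ‖toL2 (mulReal χ (u n - lowPass θ (u n))) + toL2 (mulReal χ (lowPass θ (u n)))‖ := by
        rw [← map_add, ← map_add, sub_add_cancel]
    _ ≤ C * (R⁻¹ * √(∑ j, B j ^ 2)) + ‖toL2 (mulReal χ (lowPass θ (u n)))‖ := by
        refine (norm_add_le _ _).trans (add_le_add_left ?_ _)
        exact (norm_toL2_mulReal_le hχ hC _).trans (mul_le_mul_of_nonneg_left (hhigh θ n) hC0)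
    _ < ε := by linarith

end LocalCompactness

/-! ### Compactness of localized Riesz transforms -/

section LowEnergy

variable {G : Ed d → Fin d → Fin d → ℝ} {c K : ℝ} {χ : Ed d → ℝ}

lemma inner_toL2_mulReal_partialDeriv (hχ : χ.HasTemperateGrowth) {a : Ed d → ℝ}
    (ha : a.HasTemperateGrowth) (u v : 𝓢(Ed d, ℂ)) (j : Fin d) :
    ⟪toL2 (mulReal χ (partialDeriv j u)), toL2 (mulReal a (mulReal χ v))⟫_ℂ
      = ⟪toL2 (partialDeriv j (mulReal (fun x => χ x * χ x) u)), toL2 (mulReal a v)⟫_ℂ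
        - ⟪toL2 (mulReal (realPartialDeriv j fun x => χ x * χ x) u), toL2 (mulReal a v)⟫_ℂ := by
  have hcomm : mulReal a (mulReal χ v) = mulReal χ (mulReal a v) := by
    simp only [mulReal_mulReal ha hχ, mulReal_mulReal hχ ha, mul_comm]
  have hχ2 : (fun x => χ x * χ x).HasTemperateGrowth := hχ.mul hχ
  rw [hcomm, inner_toL2_mulReal hχ, mulReal_mulReal hχ hχ, partialDeriv_mulReal hχ2, map_add,
    inner_add_left, add_sub_cancel_right]

lemma caccioppoli_inequality (hG : IsEllipticCoef G c K) (hχ : χ.HasTemperateGrowth)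
    (u : 𝓢(Ed d, ℂ)) :
    c * ∑ j, ‖toL2 (mulReal χ (partialDeriv j u))‖ ^ 2
      ≤ ‖toL2 (mulReal (fun x => χ x * χ x) u)‖ * ‖toL2 (ellipticOp G u)‖
        + ∑ j, ∑ k, ‖toL2 (mulReal (realPartialDeriv j fun x => χ x * χ x) u)‖
          * (K * ‖toL2 (partialDeriv k u)‖) := by
  have hform : ∑ j, ∑ k, ⟪toL2 (mulReal χ (partialDeriv j u)),
        toL2 (mulReal (fun x => G x j k) (mulReal χ (partialDeriv k u)))⟫_ℂ
      = ⟪toL2 (mulReal (fun x => χ x * χ x) u), toL2 (ellipticOp G u)⟫_ℂ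
        - ∑ j, ∑ k, ⟪toL2 (mulReal (realPartialDeriv j fun x => χ x * χ x) u),
          toL2 (mulReal (fun x => G x j k) (partialDeriv k u))⟫_ℂ := by
    simp only [inner_toL2_ellipticOp, ← Finset.sum_sub_distrib,
      inner_toL2_mulReal_partialDeriv hχ (hG.hasTemperateGrowth _ _)]
  refine (mul_sum_norm_toL2_sq_le hG _).trans ((Complex.re_le_norm _).trans ?_)
  rw [hform]
  refine (norm_sub_le _ _).trans (add_le_add (norm_inner_le_norm _ _) ?_)
  refine (norm_sum_le _ _).trans (Finset.sum_le_sum fun j _ => ?_)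
  refine (norm_sum_le _ _).trans (Finset.sum_le_sum fun k _ => ?_)
  refine (norm_inner_le_norm _ _).trans (mul_le_mul_of_nonneg_left ?_ (norm_nonneg _))
  exact norm_toL2_mulReal_le (hG.hasTemperateGrowth j k) (hG.abs_le j k) _

lemma tendsto_toL2_mulReal_partialDeriv (hd : 3 ≤ d) (hG : IsEllipticCoef G c K)
    {u : ℕ → 𝓢(Ed d, ℂ)} (hu : ∀ j, WeaklyNull fun n => toL2 (partialDeriv j (u n))) {C : ℝ}
    (hC : ∀ n, ‖toL2 (ellipticOp G (u n))‖ ≤ C) (hχ : χ.HasTemperateGrowth)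
    (hχc : HasCompactSupport χ) (m : Fin d) :
    Tendsto (fun n => toL2 (mulReal χ (partialDeriv m (u n)))) atTop (𝓝 0) := by
  choose B hB using fun j => (hu j).exists_norm_le
  have hK : 0 ≤ K := (abs_nonneg _).trans (hG.abs_le m m 0)
  have hχ2 : (fun x => χ x * χ x).HasTemperateGrowth := hχ.mul hχ
  have hχ2c : HasCompactSupport fun x => χ x * χ x := hχc.mul_right
  have hcut := (tendsto_toL2_mulReal hd hu hχ2 hχ2c).norm
  have hcut' := fun j => (tendsto_toL2_mulReal hd hu (hasTemperateGrowth_realPartialDeriv hχ2 j)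
    (hχ2c.fderiv_apply (𝕜 := ℝ) _)).norm
  have hlim := ((hcut.mul_const C).add (tendsto_finsetSum Finset.univ fun j _ =>
    tendsto_finsetSum Finset.univ fun k _ => (hcut' j).mul_const (K * B k))).const_mul c⁻¹
  simp only [norm_zero, zero_mul, Finset.sum_const_zero, add_zero, mul_zero] at hlim
  have hsq : Tendsto (fun n => ‖toL2 (mulReal χ (partialDeriv m (u n)))‖ ^ 2) atTop (𝓝 0) := by
    refine squeeze_zero (fun n => sq_nonneg _) (fun n => ?_) hlim
    rw [inv_mul_eq_div, le_div_iff₀' hG.pos]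
    calc _ ≤ c * ∑ j, ‖toL2 (mulReal χ (partialDeriv j (u n)))‖ ^ 2 :=
          mul_le_mul_of_nonneg_left (Finset.single_le_sum
            (f := fun j => ‖toL2 (mulReal χ (partialDeriv j (u n)))‖ ^ 2)
            (fun j _ => sq_nonneg _) (Finset.mem_univ m)) hG.pos.le
      _ ≤ _ := caccioppoli_inequality hG hχ (u n)
      _ ≤ _ := by
          gcongr with j _ k _
          · exact hC n
          · exact hB k n
  rw [tendsto_zero_iff_norm_tendsto_zero]
  simpa using hsq.sqrt

lemma exists_contDiffBump_support_subset {E F : Type*} [NormedAddCommGroup E] [NormedSpace ℝ E]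
    [Zero F] {f : E → F} (hf : HasCompactSupport f) :
    ∃ θ : ContDiffBump (0 : E), Function.support f ⊆ Metric.closedBall 0 θ.rIn := by
  obtain ⟨r, hr, hsub⟩ := hf.isCompact.isBounded.subset_closedBall_lt 0 0
  exact ⟨⟨r, r + 1, hr, lt_add_one r⟩, (subset_tsupport f).trans hsub⟩

lemma apply_toL2_mulReal {b : Ed d → ℂ} {M : L2 d →L[ℂ] L2 d}
    (hM : ∀ f, M f =ᵐ[volume] fun x => b x * f x) (hχ : χ.HasTemperateGrowth)
    (hχb : ∀ x, b x ≠ 0 → χ x = 1) (v : 𝓢(Ed d, ℂ)) : M (toL2 (mulReal χ v)) = M (toL2 v) := by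
  refine Lp.ext ?_
  filter_upwards [hM (toL2 (mulReal χ v)), hM (toL2 v), coeFn_toL2 v, coeFn_toL2 (mulReal χ v)]
    with x hMχ hMv hv hχv
  rw [hMχ, hMv, hv, hχv, mulReal_apply hχ]
  rcases eq_or_ne (b x) 0 with hb | hb
  · rw [hb, zero_mul, zero_mul]
  · rw [hχb x hb, Complex.ofReal_one, one_mul]

variable (S : SpectralCalc d G) {R : Fin d → L2 d →L[ℂ] L2 d}

lemma completelyContinuous_mul_riesz_map (hd : 3 ≤ d) (hG : IsEllipticCoef G c K)
    (hR : ∀ j, RieszOf d G S j (R j)) {ψ : ℝ → ℂ} (hψ : Continuous ψ)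
    (hsupp : HasCompactSupport ψ) {b : Ed d → ℂ} (hb : HasCompactSupport b) {M : L2 d →L[ℂ] L2 d}
    (hM : ∀ f, M f =ᵐ[volume] fun x => b x * f x) (k : Fin d) :
    CompletelyContinuous (M.comp ((R k).comp (S.map ψ))) := by
  intro f hf
  obtain ⟨C, hC⟩ := exists_schwartz_approx_riesz S hG hR hψ hsupp
  choose u hu hPu using fun n : ℕ => hC (f n) (1 / ((n : ℝ) + 1)) Nat.one_div_pos_of_nat
  obtain ⟨B, hB⟩ := hf.exists_norm_le
  have hP : ∀ n, ‖toL2 (ellipticOp G (u n))‖ ≤ |C| * B + 1 := fun n => (hPu n).trans <| by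
    gcongr
    · exact le_abs_self C
    · exact hB n
    · exact (div_le_one₀ (by positivity)).2 (le_add_of_nonneg_left n.cast_nonneg)
  have herr : ∀ j, Tendsto (fun n => toL2 (partialDeriv j (u n)) - R j (S.map ψ (f n))) atTop
      (𝓝 0) := fun j => squeeze_zero_norm (fun n => hu n j) tendsto_one_div_add_atTop_nhds_zero_nat
  have hweak : ∀ j, WeaklyNull fun n => toL2 (partialDeriv j (u n)) := fun j => by
    simpa using (weaklyNull_of_tendsto_zero (herr j)).add (hf.map ((R j).comp (S.map ψ)))
  obtain ⟨χ, hχb⟩ := exists_contDiffBump_support_subset hb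
  have hcut := tendsto_toL2_mulReal_partialDeriv hd hG hweak hP (hasTemperateGrowth_bump χ)
    χ.hasCompactSupport k
  have hlim := (M.continuous.tendsto _).comp (hcut.sub (herr k))
  simp only [sub_zero, map_zero, Function.comp_def, map_sub] at hlim
  refine hlim.congr fun n => ?_
  rw [apply_toL2_mulReal hM (hasTemperateGrowth_bump χ) fun x hx =>
    χ.one_of_mem_closedBall (hχb hx), ← map_sub, ← map_sub, sub_sub_cancel]
  rfl

lemma exists_map_comp_map_comp_div {φ : ℝ → ℂ} (hφ : Continuous φ) (hsupp : HasCompactSupport φ) :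
    ∃ ψ : ℝ → ℂ, Continuous ψ ∧ HasCompactSupport ψ ∧ ∀ lam, 0 < lam → lam ≤ 1 →
      (S.map ψ).comp (S.map fun s => φ (s / lam)) = S.map fun s => φ (s / lam) := by
  obtain ⟨θ, hθ⟩ := exists_contDiffBump_support_subset hsupp
  have hcont : Continuous fun s => (θ s : ℂ) := continuous_ofReal.comp θ.continuous
  have hcpt : HasCompactSupport fun s => (θ s : ℂ) :=
    θ.hasCompactSupport.comp_left Complex.ofReal_zero
  refine ⟨_, hcont, hcpt, fun lam hlam hlam1 => ?_⟩
  rw [← S.map_mul _ _ (goodSymbol_of_hasCompactSupport hcont hcpt)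
    (goodSymbol_comp_div hφ hsupp lam)]
  congr 1
  funext s
  rcases eq_or_ne (φ (s / lam)) 0 with hs | hs
  · rw [hs, mul_zero]
  · have hdiv : |s| / lam ≤ θ.rIn := by
      simpa [abs_of_pos hlam] using hθ hs
    have hone : θ s = 1 := θ.one_of_mem_closedBall <| mem_closedBall_zero_iff.2 <|
      (le_div_self (abs_nonneg s) hlam hlam1).trans hdiv
    rw [hone, Complex.ofReal_one, one_mul]

lemma completelyContinuous_sum_riesz_mul_riesz_map (hd : 3 ≤ d) (hG : IsEllipticCoef G c K)
    (hR : ∀ j, RieszOf d G S j (R j)) {ψ : ℝ → ℂ} (hψ : Continuous ψ)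
    (hsupp : HasCompactSupport ψ) {b : Fin d → Fin d → Ed d → ℂ}
    (hb : ∀ j k, HasCompactSupport (b j k)) {M : Fin d → Fin d → L2 d →L[ℂ] L2 d}
    (hM : ∀ j k f, M j k f =ᵐ[volume] fun x => b j k x * f x) :
    CompletelyContinuous
      ((-∑ j, ∑ k, (ContinuousLinearMap.adjoint (R j)).comp ((M j k).comp (R k))).comp
        (S.map ψ)) := by
  simp only [ContinuousLinearMap.neg_comp, ContinuousLinearMap.finsetSum_comp,
    ContinuousLinearMap.comp_assoc]
  exact .neg <| completelyContinuous_sum fun j _ => completelyContinuous_sum fun k _ =>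
    (completelyContinuous_mul_riesz_map S hd hG hR hψ hsupp (hb j k) (hM j k) k).comp_left _

end LowEnergy

end RieszLowEnergy

open RieszLowEnergy in
theorem statement15_general {d : ℕ} (hd : 3 ≤ d) {G : Ed d → Fin d → Fin d → ℝ} {c K : ℝ}
    (hG : IsEllipticCoef G c K) (S : SpectralCalc d G) {R : Fin d → L2 d →L[ℂ] L2 d}
    (hR : ∀ j, RieszOf d G S j (R j)) {b : Fin d → Fin d → Ed d → ℂ}
    (hb : ∀ j k, HasCompactSupport (b j k)) {M : Fin d → Fin d → L2 d →L[ℂ] L2 d}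
    (hM : ∀ j k f, M j k f =ᵐ[volume] fun x => b j k x * f x)
    {φ : ℝ → ℂ} (hφ : Continuous φ) (hsupp : HasCompactSupport φ) :
    Tendsto (fun lam : ℝ =>
        ‖(-∑ j, ∑ k, (ContinuousLinearMap.adjoint (R j)).comp ((M j k).comp (R k))).comp
          (S.map fun s => φ (s / lam))‖)
      (𝓝[>] 0) (𝓝 0) := by
  obtain ⟨ψ, hψ, hψc, hψφ⟩ := exists_map_comp_map_comp_div S hφ hsupp
  have hcc := completelyContinuous_sum_riesz_mul_riesz_map S hd hG hR hψ hψc hb hM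
  refine (hcc.tendsto_norm_comp (tendsto_adjoint_map_comp_div S hG hφ hsupp)).congr' ?_
  filter_upwards [Ioc_mem_nhdsGT zero_lt_one] with lam hlam
  rw [ContinuousLinearMap.comp_assoc, hψφ lam hlam.1 hlam.2]

/-- **Proposition (smallness of `R_c φ(P/λ)` at low energy).** Let `d ≥ 3`,
`P = -div(G∇)` as above, `b_{jk} ∈ C₀^∞(ℝ^d)` and
`R_c = -∑_{j,k} R(j)^* b_{jk}(x) R(k)` with `R(j)` the Riesz transform components of
`P`.  Then for `φ ∈ C₀^∞(ℝ)`, `‖R_c φ(P/λ)‖_{L²→L²} → 0` as `λ → 0⁺`. -/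
theorem statement15 (d : ℕ) (hd : 3 ≤ d) (G : Ed d → Fin d → Fin d → ℝ)
    (hG : Standing d G) (S : SpectralCalc d G)
    (Rj : Fin d → (L2 d →L[ℂ] L2 d)) (hRj : ∀ j, RieszOf d G S j (Rj j))
    (b : Fin d → Fin d → Ed d → ℝ)
    (hb : ∀ j k, ContDiff ℝ (⊤ : ℕ∞) (b j k) ∧ HasCompactSupport (b j k))
    (Mb : Fin d → Fin d → (L2 d →L[ℂ] L2 d))
    (hMb : ∀ (j k : Fin d) (f : L2 d),
      (⇑(Mb j k f)) =ᵐ[volume] fun x => ((b j k x : ℝ) : ℂ) * f x)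
    (φr : ℝ → ℝ) (hφ1 : ContDiff ℝ (⊤ : ℕ∞) φr) (hφ2 : HasCompactSupport φr) :
    Tendsto
      (fun lam : ℝ =>
        ‖(-(∑ j, ∑ k, (ContinuousLinearMap.adjoint (Rj j)).comp
              ((Mb j k).comp (Rj k)))).comp
            (S.map fun l => ((φr (l / lam) : ℝ) : ℂ))‖)
      (𝓝[>] (0:ℝ)) (𝓝 0) := by
  obtain ⟨c, K, hcoef⟩ := RieszLowEnergy.exists_isEllipticCoef hG
  exact statement15_general hd hcoef S hRj (b := fun j k x => b j k x) (φ := fun s => φr s)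
    (fun j k => (hb j k).2.comp_left Complex.ofReal_zero) hMb
    (Complex.continuous_ofReal.comp hφ1.continuous) (hφ2.comp_left Complex.ofReal_zero)
end
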